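/- Let Ψ be an immigration mechanism whose measure m satisfies ∫_𝕄 (z₁ + z₂) m(dz) < ∞, and let (P^γ_t)_{t≥0} be the corresponding transition probabilities with immigration. Then for all x, y ∈ 𝕄 and t ≥ 0: (i) every coupling Π of P^γ_t(x,·) and P^γ_t(y,·) satisfies ∫_{𝕄×𝕄}(|u₁−v₁|+|u₂−v₂|) Π(du,dv) ≥ |(x₁−y₁)π₁(t,1)+(x₂−y₂)π₂(t,1)|; and (ii) there exists a coupling Π of P^γ_t(x,·) and P^γ_t(y,·) with ∫_{𝕄×𝕄}(|u₁−v₁|+|u₂−v₂|) Π(du,dv) ≤ |x₁−y₁|π₁(t,1) + |x₂−y₂|π₂(t,1). -/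

import Mathlib

open MeasureTheory Filter Set

noncomputable section

/-- The state space `𝕄 = [0,∞) × ℕ`, as a subset of `ℝ²`. -/
def Mset : Set (ℝ × ℝ) := {z | 0 ≤ z.1 ∧ ∃ n : ℕ, z.2 = (n : ℝ)}

/-- The space `𝕄₋₁ = [0,∞) × (ℕ ∪ {-1})`, as a subset of `ℝ²`. -/
def Mm1set : Set (ℝ × ℝ) := {z | 0 ≤ z.1 ∧ ∃ n : ℤ, (-1 : ℤ) ≤ n ∧ z.2 = (n : ℝ)}

/-- The data of a branching mechanism `(Φ₁, Φ₂)` of a mixed state branching process. -/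
structure BranchingMechanism where
  a11 : ℝ
  a21 : ℝ
  alpha : ℝ
  a21_nonneg : 0 ≤ a21
  alpha_nonneg : 0 ≤ alpha
  n1 : Measure (ℝ × ℝ)
  n2 : Measure (ℝ × ℝ)
  n1_sigmaFinite : SigmaFinite n1
  n2_sigmaFinite : SigmaFinite n2
  /-- `n₁` is supported on `𝕄` -/
  n1_supp : n1 Msetᶜ = 0
  /-- `n₂` is supported on `𝕄₋₁` -/
  n2_supp : n2 Mm1setᶜ = 0
  /-- `n₁` does not charge the origin -/
  n1_zero : n1 {0} = 0
  /-- `n₂` does not charge the origin -/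
  n2_zero : n2 {0} = 0
  /-- `n₂([0,∞) × {-1}) < ∞` -/
  n2_neg1 : n2 {z : ℝ × ℝ | z.2 = -1} ≠ ⊤
  /-- `∫ (z₁ ∧ z₁² + z₂) n₁(dz) < ∞` -/
  n1_moment : ∫⁻ z, ENNReal.ofReal (min z.1 (z.1 ^ 2) + z.2) ∂n1 ≠ ⊤
  /-- `∫ (z₁ + |z₂|) n₂(dz) < ∞` -/
  n2_moment : ∫⁻ z, ENNReal.ofReal (z.1 + |z.2|) ∂n2 ≠ ⊤

/-- `Φ₁(λ) = -a₁₁λ₁ - αλ₁² - ∫ (e^{-⟨λ,z⟩} - 1 + λ₁z₁) n₁(dz)`. -/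
def mPhi1 (B : BranchingMechanism) (l : ℝ × ℝ) : ℝ :=
  -B.a11 * l.1 - B.alpha * l.1 ^ 2 -
    ∫ z, (Real.exp (-(l.1 * z.1 + l.2 * z.2)) - 1 + l.1 * z.1) ∂B.n1

/-- `Φ₂(λ) = a₂₁λ₁ + ∫ (1 - e^{-⟨λ,z⟩}) n₂(dz)`. -/
def mPhi2 (B : BranchingMechanism) (l : ℝ × ℝ) : ℝ :=
  B.a21 * l.1 + ∫ z, (1 - Real.exp (-(l.1 * z.1 + l.2 * z.2))) ∂B.n2


/-- `V : t ↦ V(t,λ)` is a continuous `[0,∞)²`-valued solution of the cumulant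
equations (3.8) with initial value `λ = l`. -/
def SolvesCumulant (B : BranchingMechanism) (l : ℝ × ℝ) (V : ℝ → ℝ × ℝ) : Prop :=
  ContinuousOn V (Ici 0) ∧
  (∀ t : ℝ, 0 ≤ t → 0 ≤ (V t).1 ∧ 0 ≤ (V t).2) ∧
  (∀ t : ℝ, 0 ≤ t →
    (V t).1 = l.1 + ∫ s in (0:ℝ)..t, mPhi1 B (V s) ∧
    (V t).2 = l.2 + ∫ s in (0:ℝ)..t, mPhi2 B (V s))

/-- `P` is the family of transition probabilities of the MSB-process with cumulant
`V`: each `P_t(x,·)` is a Borel probability measure on `𝕄` with Laplace transform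
`∫ e^{-⟨λ,y⟩} P_t(x,dy) = exp(-⟨x,V(t,λ)⟩)`. -/
def IsMSBTransition (V : ℝ → (ℝ × ℝ) → ℝ × ℝ)
    (P : ℝ → (ℝ × ℝ) → Measure (ℝ × ℝ)) : Prop :=
  ∀ t : ℝ, 0 ≤ t → ∀ x ∈ Mset,
    IsProbabilityMeasure (P t x) ∧ P t x Msetᶜ = 0 ∧
    ∀ l : ℝ × ℝ, 0 ≤ l.1 → 0 ≤ l.2 →
      ∫ y, Real.exp (-(l.1 * y.1 + l.2 * y.2)) ∂(P t x)
        = Real.exp (-(x.1 * (V t l).1 + x.2 * (V t l).2))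

/-- `π : t ↦ π(t,λ)` is a `[0,∞)²`-valued solution of the moment linear system
`dπ₁/dt = -a₁₁π₁ + π₂ ∫ z₂ n₁(dz)`,
`dπ₂/dt = a₂₁π₁ + ∫ (z₁π₁ + z₂π₂) n₂(dz)`, with `π(0,λ) = l`. -/
def SolvesMoment (B : BranchingMechanism) (l : ℝ × ℝ) (π : ℝ → ℝ × ℝ) : Prop :=
  π 0 = l ∧
  (∀ t : ℝ, 0 ≤ t → 0 ≤ (π t).1 ∧ 0 ≤ (π t).2) ∧
  (∀ t : ℝ, 0 ≤ t →
    HasDerivWithinAt (fun s => (π s).1)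
      (-B.a11 * (π t).1 + (π t).2 * ∫ z, z.2 ∂B.n1) (Ici 0) t ∧
    HasDerivWithinAt (fun s => (π s).2)
      (B.a21 * (π t).1 + ∫ z, (z.1 * (π t).1 + z.2 * (π t).2) ∂B.n2) (Ici 0) t)

/-- `Pc` is a coupling of the probability measures `μ` and `ν` on `ℝ²`. -/
def IsCoupling (Pc : Measure ((ℝ × ℝ) × (ℝ × ℝ))) (μ ν : Measure (ℝ × ℝ)) : Prop :=
  IsProbabilityMeasure Pc ∧ Pc.map Prod.fst = μ ∧ Pc.map Prod.snd = ν

/-- The immigration mechanism `Ψ(λ) = bλ₁ + ∫ (1 - e^{-⟨λ,z⟩}) m(dz)`. -/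
def mPsi (b : ℝ) (m : Measure (ℝ × ℝ)) (l : ℝ × ℝ) : ℝ :=
  b * l.1 + ∫ z, (1 - Real.exp (-(l.1 * z.1 + l.2 * z.2))) ∂m

/-- `m` is an admissible immigration measure: a σ-finite measure on `𝕄` not
charging the origin with `∫ (1∧z₁ + 1∧z₂) m(dz) < ∞`. -/
def IsImmigrationMeasure (m : Measure (ℝ × ℝ)) : Prop :=
  SigmaFinite m ∧ m Msetᶜ = 0 ∧ m {0} = 0 ∧
    ∫⁻ z, ENNReal.ofReal (min 1 z.1 + min 1 z.2) ∂m ≠ ⊤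

/-- `P` is the family of transition probabilities of the MSBI-process with
cumulant `V` and immigration mechanism `Ψ = mPsi b m`. -/
def IsMSBITransition (V : ℝ → (ℝ × ℝ) → ℝ × ℝ) (b : ℝ) (m : Measure (ℝ × ℝ))
    (P : ℝ → (ℝ × ℝ) → Measure (ℝ × ℝ)) : Prop :=
  ∀ t : ℝ, 0 ≤ t → ∀ x ∈ Mset,
    IsProbabilityMeasure (P t x) ∧ P t x Msetᶜ = 0 ∧
    ∀ l : ℝ × ℝ, 0 ≤ l.1 → 0 ≤ l.2 →
      ∫ y, Real.exp (-(l.1 * y.1 + l.2 * y.2)) ∂(P t x)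
        = Real.exp (-(x.1 * (V t l).1 + x.2 * (V t l).2)
            - ∫ s in (0:ℝ)..t, mPsi b m (V s l))

/-!
By the branching property the law started from `x` is the law started from `x ⊓ y` convolved with
an independent law with Laplace exponent `l ↦ ⟨x - x ⊓ y, V(t, l)⟩`, without immigration. Coupling
the two laws through their common summand costs at most the total mean of the two excess laws, and
the mean of a law is the derivative of its Laplace exponent at `0`, which for `V` solves the linear
system of `π`. The same derivative, applied to the test functions `e^{-ε(y₁ + y₂)} / ε`, yields the
lower bound.

The excess laws have to be constructed. That `l ↦ e^{-⟨a, V(t, l)⟩}` is a Laplace transform for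
`a` in `𝕄` amounts, by a Hausdorff moment argument on the unit square, to the positivity of a
linear functional on the span of the monomials `u^l`. Positivity is preserved by sums, products and
limits, so it propagates along Euler polygons of the cumulant equation in the coordinates
`(V₁, e^{-V₂})`, once the jump measures are truncated to finite total mass.
-/

open scoped Topology

section MomentPositive

variable {ι X : Type*} [TopologicalSpace X]

lemma exists_measure_integral_eq_of_nonneg [CompactSpace X] [T2Space X] [MeasurableSpace X]
    [BorelSpace X] (g : C(X, ℝ) →ₗ[ℝ] ℝ) (hg : ∀ f, 0 ≤ f → 0 ≤ g f) :
    ∃ μ : Measure X, IsFiniteMeasure μ ∧ ∀ f : C(X, ℝ), ∫ x, f x ∂μ = g f := by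
  let forget : CompactlySupportedContinuousMap X ℝ →ₗ[ℝ] C(X, ℝ) :=
    { toFun := fun f ↦ f.toContinuousMap
      map_add' := fun _ _ ↦ rfl
      map_smul' := fun _ _ ↦ rfl }
  let L : CompactlySupportedContinuousMap X ℝ →ₚ[ℝ] ℝ :=
    PositiveLinearMap.mk₀ (g ∘ₗ forget) fun f hf ↦ hg _ fun x ↦ hf x
  have : IsFiniteMeasureOnCompacts (RealRMK.rieszMeasure L) := by
    unfold RealRMK.rieszMeasure; infer_instance
  exact ⟨RealRMK.rieszMeasure L, ⟨isCompact_univ.measure_lt_top⟩, fun f ↦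
    RealRMK.integral_rieszMeasure L ⟨f, HasCompactSupport.of_compactSpace f⟩⟩

variable [Monoid X] {φ : ι → X →ₜ* ℝ} {f g : ι → ℝ}

/-- The functional `φ i ↦ f i` is nonnegative on every linear combination of the semicharacters
`φ i` that is nonnegative on `X`. On a compact `X` this characterises the moment functions
`f i = ∫ φ i ∂μ` of finite measures. -/
def IsMomentPositive (φ : ι → X →ₜ* ℝ) (f : ι → ℝ) : Prop :=
  ∀ (s : Finset ι) (c : ι → ℝ), (∀ x, 0 ≤ ∑ i ∈ s, c i * φ i x) → 0 ≤ ∑ i ∈ s, c i * f i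

namespace IsMomentPositive

lemma eval (x : X) : IsMomentPositive φ (fun i ↦ φ i x) := fun _ _ h ↦ h x

lemma one : IsMomentPositive φ (fun _ ↦ 1) := by
  simpa only [map_one] using eval (φ := φ) 1

lemma add (hf : IsMomentPositive φ f) (hg : IsMomentPositive φ g) :
    IsMomentPositive φ (fun i ↦ f i + g i) := fun s c h ↦ by
  simpa only [mul_add, Finset.sum_add_distrib] using add_nonneg (hf s c h) (hg s c h)

lemma const_mul (hf : IsMomentPositive φ f) {a : ℝ} (ha : 0 ≤ a) :
    IsMomentPositive φ (fun i ↦ a * f i) := fun s c h ↦ by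
  simpa only [mul_left_comm _ a, ← Finset.mul_sum] using mul_nonneg ha (hf s c h)

lemma sum {κ : Type*} {F : κ → ι → ℝ} {s : Finset κ} (hF : ∀ k ∈ s, IsMomentPositive φ (F k)) :
    IsMomentPositive φ (fun i ↦ ∑ k ∈ s, F k i) := fun t c h ↦ by
  simp only [Finset.mul_sum]
  rw [Finset.sum_comm]
  exact Finset.sum_nonneg fun k hk ↦ hF k hk t c h

lemma of_tendsto {κ : Type*} {L : Filter κ} [L.NeBot] {F : κ → ι → ℝ}
    (hF : ∀ᶠ k in L, IsMomentPositive φ (F k))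
    (hlim : ∀ i, Tendsto (fun k ↦ F k i) L (𝓝 (f i))) : IsMomentPositive φ f := fun s c h ↦
  ge_of_tendsto (tendsto_finsetSum s fun i _ ↦ (hlim i).const_mul (c i))
    (hF.mono fun _ hk ↦ hk s c h)

lemma integral {α : Type*} [MeasurableSpace α] {μ : Measure α} {F : α → ι → ℝ}
    (hF : ∀ᵐ z ∂μ, IsMomentPositive φ (F z)) (hint : ∀ i, Integrable (F · i) μ) :
    IsMomentPositive φ (fun i ↦ ∫ z, F z i ∂μ) := fun s c h ↦ by
  have hsum : ∑ i ∈ s, c i * ∫ z, F z i ∂μ = ∫ z, ∑ i ∈ s, c i * F z i ∂μ := by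
    rw [integral_finsetSum s fun i _ ↦ (hint i).const_mul (c i)]
    simp only [integral_const_mul]
  rw [hsum]
  exact integral_nonneg_of_ae (hF.mono fun z hz ↦ hz s c h)

variable [CompactSpace X]

/-- M. Riesz' extension theorem applied to `∑ c i • φ i ↦ ∑ c i * f i` on the span of the `φ i`. -/
lemma exists_linearMap (hf : IsMomentPositive φ f) {i₀ : ι} (hi₀ : ∀ x, φ i₀ x = 1) :
    ∃ g : C(X, ℝ) →ₗ[ℝ] ℝ, (∀ u, 0 ≤ u → 0 ≤ g u) ∧ ∀ i, g (φ i : C(X, ℝ)) = f i := by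
  let T : (ι →₀ ℝ) →ₗ[ℝ] C(X, ℝ) := Finsupp.linearCombination ℝ fun i ↦ (φ i : C(X, ℝ))
  let F : (ι →₀ ℝ) →ₗ[ℝ] ℝ := Finsupp.linearCombination ℝ f
  have hpos (c : ι →₀ ℝ) (hc : 0 ≤ T c) : 0 ≤ F c := by
    refine hf c.support c fun x ↦ ?_
    simpa [T, Finsupp.linearCombination_apply, Finsupp.sum] using hc x
  have hker : LinearMap.ker T ≤ LinearMap.ker F := fun c (hc : T c = 0) ↦
    le_antisymm (by simpa using hpos (-c) (by simp [hc])) (hpos c hc.ge)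
  let h : LinearMap.range T →ₗ[ℝ] ℝ :=
    (LinearMap.ker T).liftQ F hker ∘ₗ T.quotKerEquivRange.symm.toLinearMap
  have hh (c : ι →₀ ℝ) : h ⟨T c, c, rfl⟩ = F c := by
    have hc : T.quotKerEquivRange.symm ⟨T c, c, rfl⟩ = Submodule.Quotient.mk c :=
      T.quotKerEquivRange.symm_apply_eq.2 rfl
    simp only [h, LinearMap.comp_apply, LinearEquiv.coe_coe, hc, Submodule.liftQ_apply]
  obtain ⟨g, hg, hg_nonneg⟩ := riesz_extension (PointedCone.positive ℝ C(X, ℝ))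
    ⟨LinearMap.range T, h⟩ (by rintro ⟨_, c, rfl⟩ hc; exact (hpos c hc).trans_eq (hh c).symm)
    fun u ↦ ⟨⟨T (Finsupp.single i₀ ‖u‖), _, rfl⟩, fun x ↦ by
      simpa [T, hi₀] using neg_le_iff_add_nonneg'.1 (neg_le_of_abs_le (u.norm_coe_le_norm x))⟩
  refine ⟨g, hg_nonneg, fun i ↦ ?_⟩
  simpa [T, F] using (hg ⟨T (Finsupp.single i 1), _, rfl⟩).trans (hh _)

variable [T2Space X] [MeasurableSpace X] [BorelSpace X]

lemma exists_measure (hf : IsMomentPositive φ f) {i₀ : ι} (hi₀ : ∀ x, φ i₀ x = 1) :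
    ∃ μ : Measure X, IsFiniteMeasure μ ∧ ∀ i, ∫ x, φ i x ∂μ = f i := by
  obtain ⟨g, hg, hgφ⟩ := hf.exists_linearMap hi₀
  obtain ⟨μ, hμ, hint⟩ := exists_measure_integral_eq_of_nonneg g hg
  exact ⟨μ, hμ, fun i ↦ (hint _).trans (hgφ i)⟩

lemma mul (hf : IsMomentPositive φ f) (hg : IsMomentPositive φ g) {i₀ : ι}
    (hi₀ : ∀ x, φ i₀ x = 1) : IsMomentPositive φ (fun i ↦ f i * g i) := by
  obtain ⟨μ, _, hμ⟩ := hg.exists_measure hi₀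
  simp only [← hμ, ← integral_const_mul]
  refine integral (ae_of_all _ fun x s c h ↦ ?_) fun i ↦ Integrable.const_mul ?_ _
  · simp only [mul_comm (f _), ← mul_assoc]
    exact hf s (fun i ↦ c i * φ i x) fun y ↦ by simpa only [map_mul, mul_assoc] using h (x * y)
  · exact (BoundedContinuousFunction.mkOfCompact (φ i : C(X, ℝ))).integrable μ

lemma pow (hf : IsMomentPositive φ f) {i₀ : ι} (hi₀ : ∀ x, φ i₀ x = 1) (n : ℕ) :
    IsMomentPositive φ (fun i ↦ f i ^ n) := by
  induction n with
  | zero => simpa only [pow_zero] using one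
  | succ n ih => simpa only [pow_succ] using ih.mul hf hi₀

lemma exp (hf : IsMomentPositive φ f) {i₀ : ι} (hi₀ : ∀ x, φ i₀ x = 1) :
    IsMomentPositive φ (fun i ↦ Real.exp (f i)) := by
  refine of_tendsto (L := atTop) (F := fun n i ↦ ∑ k ∈ Finset.range n, f i ^ k / k.factorial)
    (Eventually.of_forall fun n ↦ sum fun k _ ↦ ?_) fun i ↦ ?_
  · simpa only [div_eq_inv_mul] using (hf.pow hi₀ k).const_mul (by positivity)
  · rw [Real.exp_eq_exp_ℝ]
    exact (NormedSpace.expSeries_div_hasSum_exp (f i)).tendsto_sum_nat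

end IsMomentPositive
end MomentPositive

section LaplaceTransform

theorem measure_eq_of_forall_mem_submonoid_integral_eq {X : Type*} [TopologicalSpace X]
    [PolishSpace X] [MeasurableSpace X] [BorelSpace X]
    {S : Submonoid (BoundedContinuousFunction X ℝ)} (hS : ∀ x y, x ≠ y → ∃ g ∈ S, g x ≠ g y)
    {μ ν : Measure X} [IsFiniteMeasure μ] [IsFiniteMeasure ν]
    (h : ∀ g ∈ S, ∫ x, g x ∂μ = ∫ x, g x ∂ν) : μ = ν := by
  let A : StarSubalgebra ℝ (BoundedContinuousFunction X ℝ) :=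
    { Algebra.adjoin ℝ (S : Set (BoundedContinuousFunction X ℝ)) with
      star_mem' := fun {g} hg ↦ by rwa [show star g = g by ext; simp] }
  refine ext_of_forall_mem_subalgebra_integral_eq_of_polish (𝕜 := ℝ) (A := A) ?_ fun g hg ↦ ?_
  · intro x y hxy
    obtain ⟨g, hg, hgxy⟩ := hS x y hxy
    exact ⟨g, ⟨g.toContinuousMap, ⟨g, Algebra.subset_adjoin hg, rfl⟩, rfl⟩, hgxy⟩
  · replace hg : g ∈ Submodule.span ℝ (S : Set (BoundedContinuousFunction X ℝ)) := by
      rw [← Submonoid.closure_eq S, ← Algebra.adjoin_eq_span]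
      exact hg
    induction hg using Submodule.span_induction with
    | mem g hg => exact h g hg
    | zero => simp
    | add f g _ _ hf hg =>
      simp only [BoundedContinuousFunction.coe_add, Pi.add_apply]
      rw [integral_add (f.integrable _) (g.integrable _),
        integral_add (f.integrable _) (g.integrable _), hf, hg]
    | smul a g _ hg =>
      simp only [BoundedContinuousFunction.coe_smul, integral_smul, hg]

/-- The closed quadrant `[0, ∞)²`, with the product order of `ℝ × ℝ`: the arguments of a bivariate
Laplace transform. -/
abbrev Quadrant := {l : ℝ × ℝ // 0 ≤ l}

/-- The monomials `u₁ ^ l₁ * u₂ ^ l₂` on the unit square. Under `u = (e^{-y₁}, e^{-y₂})` they become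
the exponentials `e^{-⟨l, y⟩}`; the convention `0 ^ 0 = 1` makes them semicharacters. -/
def monomial (l : Quadrant) : unitInterval × unitInterval →ₜ* ℝ where
  toFun u := (u.1 : ℝ) ^ l.1.1 * (u.2 : ℝ) ^ l.1.2
  map_one' := by simp
  map_mul' u v := by
    simp only [Prod.fst_mul, Prod.snd_mul, Icc.coe_mul]
    rw [Real.mul_rpow u.1.2.1 v.1.2.1, Real.mul_rpow u.2.2.1 v.2.2.1]
    ring
  continuous_toFun :=
    ((Real.continuous_rpow_const l.2.1).comp (by fun_prop)).mul
      ((Real.continuous_rpow_const l.2.2).comp (by fun_prop))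

lemma monomial_apply (l : Quadrant) (u : unitInterval × unitInterval) :
    monomial l u = (u.1 : ℝ) ^ l.1.1 * (u.2 : ℝ) ^ l.1.2 := rfl

lemma monomial_zero_apply (u : unitInterval × unitInterval) : monomial 0 u = 1 := by
  simp [monomial_apply]

/-- The law `μ` on the nonnegative quadrant has Laplace transform `e^{-L}`, that is, `L` is its
Laplace exponent. -/
structure HasLaplaceExponent (μ : Measure (ℝ × ℝ)) (L : ℝ × ℝ → ℝ) : Prop where
  isProbabilityMeasure : IsProbabilityMeasure μ
  ae_nonneg : ∀ᵐ y ∂μ, 0 ≤ y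
  integral_exp : ∀ l, 0 ≤ l → ∫ y, Real.exp (-(l.1 * y.1 + l.2 * y.2)) ∂μ = Real.exp (-L l)

lemma exp_neg_inner_le_one {l y : ℝ × ℝ} (hl : 0 ≤ l) (hy : 0 ≤ y) :
    Real.exp (-(l.1 * y.1 + l.2 * y.2)) ≤ 1 :=
  Real.exp_le_one_iff.2 <|
    neg_nonpos.2 <| add_nonneg (mul_nonneg hl.1 hy.1) (mul_nonneg hl.2 hy.2)

/-- The exponentials `e^{-⟨l, ·⟩}` on the quadrant, which the Stone-Weierstrass argument for the
uniqueness of Laplace transforms uses. -/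
def quadrantExp (l : Quadrant) : BoundedContinuousFunction Quadrant ℝ :=
  BoundedContinuousFunction.ofNormedAddCommGroup
    (fun y ↦ Real.exp (-(l.1.1 * y.1.1 + l.1.2 * y.1.2))) (by fun_prop) 1
    fun y ↦ by simpa using exp_neg_inner_le_one l.2 y.2

lemma quadrantExp_apply (l y : Quadrant) :
    quadrantExp l y = Real.exp (-(l.1.1 * y.1.1 + l.1.2 * y.1.2)) := rfl

lemma exists_quadrantExp_ne {y z : Quadrant} (hyz : y ≠ z) :
    ∃ l, quadrantExp l y ≠ quadrantExp l z := by
  by_contra! h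
  have h₁ := h ⟨(1, 0), zero_le_one, le_rfl⟩
  have h₂ := h ⟨(0, 1), le_rfl, zero_le_one⟩
  simp only [quadrantExp_apply, one_mul, zero_mul, add_zero, zero_add, Real.exp_eq_exp,
    neg_inj] at h₁ h₂
  exact hyz (Subtype.ext (Prod.ext h₁ h₂))

namespace HasLaplaceExponent

variable {μ ν : Measure (ℝ × ℝ)} {L M : ℝ × ℝ → ℝ}

lemma restrict_nonneg (hμ : HasLaplaceExponent μ L) : μ.restrict {y | 0 ≤ y} = μ :=
  Measure.restrict_eq_self_of_ae_mem hμ.ae_nonneg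

theorem unique (hμ : HasLaplaceExponent μ L) (hν : HasLaplaceExponent ν L) : μ = ν := by
  have := hμ.isProbabilityMeasure
  have := hν.isProbabilityMeasure
  have hmeas : MeasurableSet {y : ℝ × ℝ | 0 ≤ y} := measurableSet_Ici
  have : PolishSpace Quadrant := (isClosed_Ici (a := (0 : ℝ × ℝ))).polishSpace
  let S : Submonoid (BoundedContinuousFunction Quadrant ℝ) :=
    { carrier := range quadrantExp
      one_mem' := ⟨0, by ext; simp [quadrantExp_apply]⟩
      mul_mem' := by
        rintro _ _ ⟨l, rfl⟩ ⟨m, rfl⟩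
        refine ⟨l + m, by ext y; simp [quadrantExp_apply, ← Real.exp_add]; ring⟩ }
  have hcomap : μ.comap ((↑) : Quadrant → ℝ × ℝ) = ν.comap (↑) := by
    refine measure_eq_of_forall_mem_submonoid_integral_eq (S := S) (fun y z hyz ↦ ?_) ?_
    · obtain ⟨l, hl⟩ := exists_quadrantExp_ne hyz
      exact ⟨_, ⟨l, rfl⟩, hl⟩
    · rintro _ ⟨l, rfl⟩
      have hint {ρ : Measure (ℝ × ℝ)} (hρ : HasLaplaceExponent ρ L) :
          ∫ y, quadrantExp l y ∂ρ.comap ((↑) : Quadrant → ℝ × ℝ) = Real.exp (-L l) := by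
        refine (integral_subtype_comap hmeas fun y : ℝ × ℝ ↦
          Real.exp (-(l.1.1 * y.1 + l.1.2 * y.2))).trans ?_
        rw [hρ.restrict_nonneg, hρ.integral_exp l l.2]
      rw [hint hμ, hint hν]
  have hmap {ρ : Measure (ℝ × ℝ)} (hρ : HasLaplaceExponent ρ L) :
      (ρ.comap ((↑) : Quadrant → ℝ × ℝ)).map (↑) = ρ :=
    (map_comap_subtype_coe hmeas ρ).trans hρ.restrict_nonneg
  rw [← hmap hμ, hcomap, hmap hν]

end HasLaplaceExponent

lemma monomial_eq_exp_neg_log {u : unitInterval × unitInterval} (h₁ : u.1 ≠ 0) (h₂ : u.2 ≠ 0)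
    (l : Quadrant) : monomial l u =
      Real.exp (-(l.1.1 * -Real.log u.1 + l.1.2 * -Real.log u.2)) := by
  rw [monomial_apply, Real.rpow_def_of_pos (unitInterval.pos_iff_ne_zero.2 h₁),
    Real.rpow_def_of_pos (unitInterval.pos_iff_ne_zero.2 h₂), ← Real.exp_add]
  ring_nf

lemma monomial_le_indicator {l : Quadrant} (h₁ : l.1.1 ≠ 0) (h₂ : l.1.2 ≠ 0)
    (u : unitInterval × unitInterval) :
    monomial l u ≤ indicator {u | u.1 ≠ 0 ∧ u.2 ≠ 0} 1 u := by
  rw [monomial_apply]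
  by_cases hu : u.1 ≠ 0 ∧ u.2 ≠ 0
  · rw [indicator_of_mem (show u ∈ {u | u.1 ≠ 0 ∧ u.2 ≠ 0} from hu)]
    exact mul_le_one₀ (Real.rpow_le_one u.1.2.1 u.1.2.2 l.2.1) (Real.rpow_nonneg u.2.2.1 _)
      (Real.rpow_le_one u.2.2.1 u.2.2.2 l.2.2)
  · rw [indicator_of_notMem (show u ∉ {u | u.1 ≠ 0 ∧ u.2 ≠ 0} from hu)]
    rcases not_and_or.1 hu with h | h <;> simp [not_not.1 h, h₁, h₂]

lemma ae_ne_zero_of_integral_monomial {μ : Measure (unitInterval × unitInterval)}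
    [IsProbabilityMeasure μ] {L : ℝ × ℝ → ℝ}
    (hμ : ∀ l : Quadrant, ∫ u, monomial l u ∂μ = Real.exp (-L l))
    (hlim : Tendsto (fun ε : ℝ ↦ L (ε, ε)) (𝓝[>] 0) (𝓝 0)) :
    ∀ᵐ u ∂μ, u.1 ≠ 0 ∧ u.2 ≠ 0 := by
  have hmeas : MeasurableSet {u : unitInterval × unitInterval | u.1 ≠ 0 ∧ u.2 ≠ 0} :=
    (measurableSet_eq_fun measurable_fst measurable_const).compl.inter
      (measurableSet_eq_fun measurable_snd measurable_const).compl
  have hle {ε : ℝ} (hε : 0 < ε) :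
      Real.exp (-L (ε, ε)) ≤ μ.real {u | u.1 ≠ 0 ∧ u.2 ≠ 0} := by
    rw [← hμ ⟨(ε, ε), hε.le, hε.le⟩, ← integral_indicator_one hmeas]
    exact integral_mono
      ((BoundedContinuousFunction.mkOfCompact (monomial _).toContinuousMap).integrable μ)
      ((integrable_const 1).indicator hmeas) (monomial_le_indicator hε.ne' hε.ne')
  have hexp : Tendsto (fun ε ↦ Real.exp (-L (ε, ε))) (𝓝[>] 0) (𝓝 1) := by
    simpa using hlim.neg.rexp
  have hone := le_of_tendsto hexp (eventually_mem_nhdsWithin.mono fun ε hε ↦ hle hε)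
  exact (mem_ae_iff_prob_eq_one hmeas).2
    ((ENNReal.toReal_eq_one_iff _).1 (measureReal_le_one.antisymm hone))

/-- Bernstein's theorem on the quadrant. -/
theorem IsMomentPositive.exists_hasLaplaceExponent {L : ℝ × ℝ → ℝ}
    (hL : IsMomentPositive monomial fun l ↦ Real.exp (-L l)) (h0 : L 0 = 0)
    (hlim : Tendsto (fun ε : ℝ ↦ L (ε, ε)) (𝓝[>] 0) (𝓝 0)) :
    ∃ μ, HasLaplaceExponent μ L := by
  obtain ⟨μ, _, hμ⟩ := hL.exists_measure monomial_zero_apply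
  have : IsProbabilityMeasure μ := ⟨(ENNReal.toReal_eq_one_iff _).1 <| by
    simpa [monomial_zero_apply, h0, measureReal_def] using hμ 0⟩
  have hne := ae_ne_zero_of_integral_monomial hμ hlim
  have hmeas : Measurable fun u : unitInterval × unitInterval ↦
      (-Real.log u.1, -Real.log u.2) := by fun_prop
  refine ⟨μ.map fun u ↦ (-Real.log u.1, -Real.log u.2),
    Measure.isProbabilityMeasure_map hmeas.aemeasurable, ?_, fun l hl ↦ ?_⟩
  · refine (ae_map_iff hmeas.aemeasurable measurableSet_Ici).2 (ae_of_all _ fun u ↦ ?_)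
    exact ⟨neg_nonneg.2 (Real.log_nonpos u.1.2.1 u.1.2.2),
      neg_nonneg.2 (Real.log_nonpos u.2.2.1 u.2.2.2)⟩
  · rw [integral_map hmeas.aemeasurable (by fun_prop), ← hμ ⟨l, hl⟩]
    exact integral_congr_ae (hne.mono fun u hu ↦ (monomial_eq_exp_neg_log hu.1 hu.2 ⟨l, hl⟩).symm)

end LaplaceTransform

section LaplaceExponent

lemma tendsto_one_sub_exp_neg_div {κ : Type*} {F : Filter κ} {X d : κ → ℝ} {c : ℝ}
    (hd : Tendsto d F (𝓝 0)) (hd0 : ∀ᶠ k in F, d k ≠ 0)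
    (hX : Tendsto (fun k ↦ X k / d k) F (𝓝 c)) :
    Tendsto (fun k ↦ (1 - Real.exp (-X k)) / d k) F (𝓝 c) := by
  have hX0 : Tendsto X F (𝓝 0) := by
    simpa using (hX.mul hd).congr' (hd0.mono fun k hk ↦ div_mul_cancel₀ (X k) hk)
  have hderiv : HasDerivAt (fun x ↦ 1 - Real.exp (-x)) 1 0 := by
    simpa using ((hasDerivAt_neg (0 : ℝ)).exp.const_sub 1)
  have hslope : Tendsto (dslope (fun x ↦ 1 - Real.exp (-x)) 0) (𝓝 0) (𝓝 1) := by
    have := continuousAt_dslope_same.2 hderiv.differentiableAt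
    rwa [ContinuousAt, dslope_same, hderiv.deriv] at this
  have hfactor (x : ℝ) : x * dslope (fun x ↦ 1 - Real.exp (-x)) 0 x = 1 - Real.exp (-x) := by
    simpa using sub_smul_dslope (fun x ↦ 1 - Real.exp (-x)) 0 x
  simpa only [mul_one, div_mul_eq_mul_div, Function.comp_apply, hfactor] using
    hX.mul (hslope.comp hX0)

lemma abs_exp_neg_sub_exp_neg_le {r s : ℝ} (hr : 0 ≤ r) (hs : 0 ≤ s) :
    |Real.exp (-r) - Real.exp (-s)| ≤ |r - s| := by
  have hderiv (x : ℝ) : HasDerivAt (fun x ↦ Real.exp (-x)) (-Real.exp (-x)) x := by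
    simpa using (hasDerivAt_neg x).exp
  simpa using (convex_Ici (0 : ℝ)).norm_image_sub_le_of_norm_hasDerivWithin_le (C := 1)
    (fun x _ ↦ (hderiv x).hasDerivWithinAt)
    (fun x hx ↦ by simpa using hx) (mem_Ici.2 hs) (mem_Ici.2 hr)

namespace HasLaplaceExponent

variable {μ ν : Measure (ℝ × ℝ)} {L M : ℝ × ℝ → ℝ}

lemma integrable_exp (hμ : HasLaplaceExponent μ L) {l : ℝ × ℝ} (hl : 0 ≤ l) :
    Integrable (fun y : ℝ × ℝ ↦ Real.exp (-(l.1 * y.1 + l.2 * y.2))) μ :=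
  have := hμ.isProbabilityMeasure
  Integrable.of_bound (by fun_prop) 1 <| hμ.ae_nonneg.mono fun y hy ↦ by
    simpa using exp_neg_inner_le_one hl hy

lemma conv (hμ : HasLaplaceExponent μ L) (hν : HasLaplaceExponent ν M) :
    HasLaplaceExponent (μ.conv ν) (fun l ↦ L l + M l) := by
  have := hμ.isProbabilityMeasure
  have := hν.isProbabilityMeasure
  refine ⟨inferInstance, ?_, fun l hl ↦ ?_⟩
  · refine (ae_map_iff (by fun_prop) measurableSet_Ici).2 ?_
    filter_upwards [Measure.quasiMeasurePreserving_fst.ae hμ.ae_nonneg,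
      Measure.quasiMeasurePreserving_snd.ae hν.ae_nonneg] with w h₁ h₂ using add_nonneg h₁ h₂
  · rw [neg_add, Real.exp_add, ← hμ.integral_exp l hl, ← hν.integral_exp l hl,
      ← integral_prod_mul, Measure.conv, integral_map (by fun_prop) (by fun_prop)]
    refine integral_congr_ae (ae_of_all _ fun w ↦ ?_)
    simp only [← Real.exp_add, Prod.fst_add, Prod.snd_add]
    ring_nf

lemma lintegral_one_sub_exp (hμ : HasLaplaceExponent μ L) {ε : ℝ} (hε : 0 < ε) :
    ∫⁻ y, ENNReal.ofReal ((1 - Real.exp (-(ε * y.1 + ε * y.2))) / ε) ∂μ =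
      ENNReal.ofReal ((1 - Real.exp (-L (ε, ε))) / ε) := by
  have := hμ.isProbabilityMeasure
  have hε' : (0 : ℝ × ℝ) ≤ (ε, ε) := ⟨hε.le, hε.le⟩
  have hexp : Integrable (fun y : ℝ × ℝ ↦ Real.exp (-(ε * y.1 + ε * y.2))) μ :=
    hμ.integrable_exp hε'
  have hdiff : Integrable (fun y : ℝ × ℝ ↦ (1 - Real.exp (-(ε * y.1 + ε * y.2))) / ε) μ :=
    ((integrable_const 1).sub hexp).div_const ε
  rw [← ofReal_integral_eq_lintegral_ofReal hdiff]
  · rw [integral_div, integral_sub (integrable_const 1) hexp, hμ.integral_exp _ hε']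
    simp
  · exact hμ.ae_nonneg.mono fun y hy ↦
      div_nonneg (sub_nonneg.2 (exp_neg_inner_le_one hε' hy)) hε.le

theorem lintegral_add_le (hμ : HasLaplaceExponent μ L) {c : ℝ}
    (hL : Tendsto (fun ε : ℝ ↦ L (ε, ε) / ε) (𝓝[>] 0) (𝓝 c)) :
    ∫⁻ y, ENNReal.ofReal (y.1 + y.2) ∂μ ≤ ENNReal.ofReal c := by
  let d (k : ℕ) : ℝ := 1 / (k + 1)
  have hd0 (k : ℕ) : 0 < d k := Nat.one_div_pos_of_nat
  have hd : Tendsto d atTop (𝓝[>] 0) := tendsto_nhdsWithin_iff.2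
    ⟨tendsto_one_div_add_atTop_nhds_zero_nat, Eventually.of_forall hd0⟩
  have hd' := tendsto_one_div_add_atTop_nhds_zero_nat (𝕜 := ℝ)
  have hne : ∀ᶠ k in atTop, d k ≠ 0 := Eventually.of_forall fun k ↦ (hd0 k).ne'
  have hlim (y : ℝ × ℝ) : Tendsto
      (fun k ↦ ENNReal.ofReal ((1 - Real.exp (-(d k * y.1 + d k * y.2))) / d k)) atTop
      (𝓝 (ENNReal.ofReal (y.1 + y.2))) := by
    refine ENNReal.tendsto_ofReal (tendsto_one_sub_exp_neg_div hd' hne ?_)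
    exact tendsto_const_nhds.congr fun k ↦ by rw [← mul_add, mul_div_cancel_left₀ _ (hd0 k).ne']
  calc ∫⁻ y, ENNReal.ofReal (y.1 + y.2) ∂μ
      = ∫⁻ y, liminf (fun k ↦
          ENNReal.ofReal ((1 - Real.exp (-(d k * y.1 + d k * y.2))) / d k)) atTop ∂μ :=
        lintegral_congr fun y ↦ (hlim y).liminf_eq.symm
    _ ≤ liminf (fun k ↦
          ∫⁻ y, ENNReal.ofReal ((1 - Real.exp (-(d k * y.1 + d k * y.2))) / d k) ∂μ) atTop :=
        lintegral_liminf_le fun k ↦ by fun_prop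
    _ = ENNReal.ofReal c := by
        simp only [hμ.lintegral_one_sub_exp (hd0 _)]
        exact (ENNReal.tendsto_ofReal
          (tendsto_one_sub_exp_neg_div hd' hne (hL.comp hd))).liminf_eq

lemma ofReal_abs_sub_div_le {Pc : Measure ((ℝ × ℝ) × (ℝ × ℝ))} (hPc : IsCoupling Pc μ ν)
    (hμ : HasLaplaceExponent μ L) (hν : HasLaplaceExponent ν M) {ε : ℝ} (hε : 0 < ε) :
    ENNReal.ofReal |(Real.exp (-L (ε, ε)) - Real.exp (-M (ε, ε))) / ε| ≤
      ∫⁻ w, ENNReal.ofReal (|w.1.1 - w.2.1| + |w.1.2 - w.2.2|) ∂Pc := by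
  obtain ⟨_, rfl, rfl⟩ := hPc
  have hε' : (0 : ℝ × ℝ) ≤ (ε, ε) := ⟨hε.le, hε.le⟩
  have hint₁ : Integrable (fun w : (ℝ × ℝ) × (ℝ × ℝ) ↦
      Real.exp (-(ε * w.1.1 + ε * w.1.2))) Pc :=
    (hμ.integrable_exp hε').comp_measurable measurable_fst
  have hint₂ : Integrable (fun w : (ℝ × ℝ) × (ℝ × ℝ) ↦
      Real.exp (-(ε * w.2.1 + ε * w.2.2))) Pc :=
    (hν.integrable_exp hε').comp_measurable measurable_snd
  rw [← hμ.integral_exp _ hε', ← hν.integral_exp _ hε',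
    integral_map measurable_fst.aemeasurable (by fun_prop),
    integral_map measurable_snd.aemeasurable (by fun_prop), ← integral_sub hint₁ hint₂,
    ← integral_div, ← Real.norm_eq_abs, ofReal_norm]
  refine (enorm_integral_le_lintegral_enorm _).trans (lintegral_mono_ae ?_)
  filter_upwards [ae_of_ae_map measurable_fst.aemeasurable hμ.ae_nonneg,
    ae_of_ae_map measurable_snd.aemeasurable hν.ae_nonneg] with w h₁ h₂
  rw [← ofReal_norm, Real.norm_eq_abs, abs_div, abs_of_pos hε]
  refine ENNReal.ofReal_le_ofReal ((div_le_iff₀ hε).2 ?_)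
  calc |Real.exp (-(ε * w.1.1 + ε * w.1.2)) - Real.exp (-(ε * w.2.1 + ε * w.2.2))|
      ≤ |(ε * w.1.1 + ε * w.1.2) - (ε * w.2.1 + ε * w.2.2)| :=
        abs_exp_neg_sub_exp_neg_le
          (add_nonneg (mul_nonneg hε.le h₁.1) (mul_nonneg hε.le h₁.2))
          (add_nonneg (mul_nonneg hε.le h₂.1) (mul_nonneg hε.le h₂.2))
    _ = |(w.1.1 - w.2.1) + (w.1.2 - w.2.2)| * ε := by
        rw [← abs_of_pos hε, ← abs_mul, abs_of_pos hε]; ring_nf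
    _ ≤ (|w.1.1 - w.2.1| + |w.1.2 - w.2.2|) * ε := by gcongr; exact abs_add_le _ _

/-- The test functions `e^{-ε(y₁ + y₂)} / ε`, which are `1`-Lipschitz for the `ℓ¹` distance on the
quadrant, detect the difference of the means as `ε → 0`. -/
theorem ofReal_abs_le_of_isCoupling {Pc : Measure ((ℝ × ℝ) × (ℝ × ℝ))} (hPc : IsCoupling Pc μ ν)
    (hμ : HasLaplaceExponent μ L) (hν : HasLaplaceExponent ν M) {c : ℝ}
    (hL : Tendsto (fun ε : ℝ ↦ L (ε, ε)) (𝓝[>] 0) (𝓝 0))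
    (hLM : Tendsto (fun ε : ℝ ↦ (L (ε, ε) - M (ε, ε)) / ε) (𝓝[>] 0) (𝓝 c)) :
    ENNReal.ofReal |c| ≤ ∫⁻ w, ENNReal.ofReal (|w.1.1 - w.2.1| + |w.1.2 - w.2.2|) ∂Pc := by
  have hpos : ∀ᶠ ε : ℝ in 𝓝[>] 0, 0 < ε := eventually_mem_nhdsWithin
  have hLM' : Tendsto (fun ε : ℝ ↦ (M (ε, ε) - L (ε, ε)) / ε) (𝓝[>] 0) (𝓝 (-c)) :=
    hLM.neg.congr fun ε ↦ by ring
  have hexp : Tendsto (fun ε ↦ Real.exp (-L (ε, ε))) (𝓝[>] 0) (𝓝 1) := by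
    simpa using hL.neg.rexp
  have hdiff := tendsto_one_sub_exp_neg_div (tendsto_id.mono_left nhdsWithin_le_nhds)
    (hpos.mono fun ε hε ↦ hε.ne') hLM'
  have hlim : Tendsto (fun ε ↦ (Real.exp (-L (ε, ε)) - Real.exp (-M (ε, ε))) / ε) (𝓝[>] 0)
      (𝓝 (-c)) := by
    refine (by simpa using hexp.mul hdiff : Tendsto _ _ (𝓝 (-c))).congr fun ε ↦ ?_
    rw [mul_div_assoc', mul_sub, mul_one, ← Real.exp_add]
    ring_nf
  rw [← abs_neg]
  exact le_of_tendsto (ENNReal.tendsto_ofReal hlim.abs)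
    (hpos.mono fun ε hε ↦ ofReal_abs_sub_div_le hPc hμ hν hε)

end HasLaplaceExponent

/-- The joint law of `(ξ + η, ξ + ζ)` for independent `ξ ∼ μ`, `η ∼ ν`, `ζ ∼ ρ`: a coupling of
`μ ∗ ν` and `μ ∗ ρ` whose two components share the summand `ξ`. -/
def sharedSummandCoupling (μ ν ρ : Measure (ℝ × ℝ)) : Measure ((ℝ × ℝ) × (ℝ × ℝ)) :=
  (μ.prod (ν.prod ρ)).map fun w ↦ (w.1 + w.2.1, w.1 + w.2.2)

section SharedSummand

variable {μ ν ρ : Measure (ℝ × ℝ)} [IsProbabilityMeasure μ] [IsProbabilityMeasure ν]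
  [IsProbabilityMeasure ρ]

lemma isCoupling_sharedSummandCoupling :
    IsCoupling (sharedSummandCoupling μ ν ρ) (μ.conv ν) (μ.conv ρ) := by
  refine ⟨Measure.isProbabilityMeasure_map (by fun_prop), ?_, ?_⟩
  · rw [sharedSummandCoupling, Measure.map_map (by fun_prop) (by fun_prop), Measure.conv,
      ← ((MeasurePreserving.id μ).prod (measurePreserving_fst (μ := ν) (ν := ρ))).map_eq,
      Measure.map_map (by fun_prop) (by fun_prop)]
    rfl
  · rw [sharedSummandCoupling, Measure.map_map (by fun_prop) (by fun_prop), Measure.conv,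
      ← ((MeasurePreserving.id μ).prod (measurePreserving_snd (μ := ν) (ν := ρ))).map_eq,
      Measure.map_map (by fun_prop) (by fun_prop)]
    rfl

lemma lintegral_sharedSummandCoupling_le (hν : ∀ᵐ y ∂ν, 0 ≤ y) (hρ : ∀ᵐ y ∂ρ, 0 ≤ y) :
    ∫⁻ w, ENNReal.ofReal (|w.1.1 - w.2.1| + |w.1.2 - w.2.2|) ∂sharedSummandCoupling μ ν ρ ≤
      ∫⁻ y, ENNReal.ofReal (y.1 + y.2) ∂ν + ∫⁻ y, ENNReal.ofReal (y.1 + y.2) ∂ρ := by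
  rw [sharedSummandCoupling, lintegral_map (by fun_prop) (by fun_prop)]
  simp only [Prod.fst_add, Prod.snd_add, add_sub_add_left_eq_sub]
  rw [(measurePreserving_snd (μ := μ) (ν := ν.prod ρ)).lintegral_comp
      (f := fun w ↦ ENNReal.ofReal (|w.1.1 - w.2.1| + |w.1.2 - w.2.2|)) (by fun_prop),
    ← (measurePreserving_fst (μ := ν) (ν := ρ)).lintegral_comp
      (f := fun y ↦ ENNReal.ofReal (y.1 + y.2)) (by fun_prop),
    ← (measurePreserving_snd (μ := ν) (ν := ρ)).lintegral_comp
      (f := fun y ↦ ENNReal.ofReal (y.1 + y.2)) (by fun_prop), ← lintegral_add_left (by fun_prop)]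
  refine lintegral_mono_ae ?_
  filter_upwards [Measure.quasiMeasurePreserving_fst.ae hν,
    Measure.quasiMeasurePreserving_snd.ae hρ] with w ⟨h₁, h₂⟩ ⟨h₃, h₄⟩
  rw [← ENNReal.ofReal_add (add_nonneg h₁ h₂) (add_nonneg h₃ h₄)]
  refine ENNReal.ofReal_le_ofReal ?_
  calc |w.1.1 - w.2.1| + |w.1.2 - w.2.2|
      ≤ (|w.1.1| + |w.2.1|) + (|w.1.2| + |w.2.2|) := add_le_add (abs_sub _ _) (abs_sub _ _)
    _ = (w.1.1 + w.1.2) + (w.2.1 + w.2.2) := by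
        rw [abs_of_nonneg h₁, abs_of_nonneg h₂, abs_of_nonneg h₃, abs_of_nonneg h₄]; ring

end SharedSummand
end LaplaceExponent

section VectorField

/-- The factor `e^{-⟨v,z⟩}` in the coordinates `p = (v₁, e^{-v₂})`. -/
def jumpFactor (p z : ℝ × ℝ) : ℝ := Real.exp (-(p.1 * z.1)) * p.2 ^ z.2

/-- The integrand of `Φ₁` against `n₁` in the coordinates `p = (v₁, e^{-v₂})`. -/
def jumpField₁ (p z : ℝ × ℝ) : ℝ := 1 - p.1 * z.1 - jumpFactor p z

/-- The integrand of `-e^{-v₂} Φ₂` against `n₂` in the coordinates `p = (v₁, e^{-v₂})`. It is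
regular up to `p₂ = 0` even for `z₂ = -1`. -/
def jumpField₂ (p z : ℝ × ℝ) : ℝ := jumpFactor p (z.1, z.2 + 1) - p.2

/-- The integrand of the moment condition on `n₁`. -/
def weight₁ (z : ℝ × ℝ) : ℝ := min z.1 (z.1 ^ 2) + z.2

/-- The integrand of the moment condition on `n₂`. -/
def weight₂ (z : ℝ × ℝ) : ℝ := z.1 + |z.2|

/-- The range of `(v₁, e^{-v₂})` for `v` in the quadrant with `v₁ ≤ R`, including `v₂ = ∞`. -/
abbrev strip (R : ℝ) : Set (ℝ × ℝ) := Icc 0 R ×ˢ Icc 0 1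

/-- The union of the sets `strip R`. -/
abbrev halfStrip : Set (ℝ × ℝ) := Ici 0 ×ˢ Icc 0 1

lemma mem_strip_fst {p : ℝ × ℝ} (hp : p ∈ halfStrip) : p ∈ strip p.1 :=
  ⟨⟨hp.1, le_rfl⟩, hp.2⟩

@[fun_prop]
lemma measurable_jumpFactor (p : ℝ × ℝ) : Measurable (jumpFactor p) := by
  unfold jumpFactor; fun_prop

@[fun_prop]
lemma measurable_jumpField₁ (p : ℝ × ℝ) : Measurable (jumpField₁ p) := by
  unfold jumpField₁; fun_prop

@[fun_prop]
lemma measurable_jumpField₂ (p : ℝ × ℝ) : Measurable (jumpField₂ p) := by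
  unfold jumpField₂; fun_prop

lemma jumpField₁_zero_one (z : ℝ × ℝ) : jumpField₁ (0, 1) z = 0 := by
  simp [jumpField₁, jumpFactor]

lemma jumpField₂_zero_one (z : ℝ × ℝ) : jumpField₂ (0, 1) z = 0 := by
  simp [jumpField₂, jumpFactor]

lemma abs_fst_sub_le_dist (p q : ℝ × ℝ) : |p.1 - q.1| ≤ dist p q := le_max_left _ _

lemma abs_snd_sub_le_dist (p q : ℝ × ℝ) : |p.2 - q.2| ≤ dist p q := le_max_right _ _

lemma abs_exp_neg_mul_sub_le {r s x : ℝ} (hr : 0 ≤ r) (hs : 0 ≤ s) (hx : 0 ≤ x) :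
    |Real.exp (-(r * x)) - Real.exp (-(s * x))| ≤ x * |r - s| := by
  have := abs_exp_neg_sub_exp_neg_le (mul_nonneg hr hx) (mul_nonneg hs hx)
  rwa [← sub_mul, abs_mul, abs_of_nonneg hx, mul_comm |r - s|] at this

lemma abs_exp_neg_add_sub_le {r s a : ℝ} (hr : r ∈ Icc 0 a) (hs : s ∈ Icc 0 a) :
    |(Real.exp (-r) + r) - (Real.exp (-s) + s)| ≤ min 1 a * |r - s| := by
  have hderiv (x : ℝ) : HasDerivAt (fun x ↦ Real.exp (-x) + x) (-Real.exp (-x) + 1) x := by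
    simpa using (hasDerivAt_neg x).exp.fun_add (hasDerivAt_id' x)
  refine (convex_Icc 0 a).norm_image_sub_le_of_norm_hasDerivWithin_le
    (fun x _ ↦ (hderiv x).hasDerivWithinAt) (fun x hx ↦ ?_) hs hr
  have h₁ : Real.exp (-x) ≤ 1 := Real.exp_le_one_iff.2 (neg_nonpos.2 hx.1)
  have h₂ := Real.add_one_le_exp (-x)
  rw [Real.norm_eq_abs, abs_of_nonneg (by linarith)]
  exact le_min (by linarith [Real.exp_nonneg (-x)]) (by linarith [hx.2])

variable {R : ℝ} {p q z : ℝ × ℝ}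

lemma jumpFactor_mem_Icc (hp : p ∈ strip R) (hz₁ : 0 ≤ z.1) (hz₂ : 0 ≤ z.2) :
    jumpFactor p z ∈ Icc 0 1 :=
  ⟨mul_nonneg (Real.exp_nonneg _) (Real.rpow_nonneg hp.2.1 _),
    mul_le_one₀ (Real.exp_le_one_iff.2 (neg_nonpos.2 (mul_nonneg hp.1.1 hz₁)))
      (Real.rpow_nonneg hp.2.1 _) (Real.rpow_le_one hp.2.1 hp.2.2 hz₂)⟩

lemma abs_jumpFactor_sub_le (hp : p ∈ strip R) (hq : q ∈ strip R) (hz : z ∈ Mset) :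
    |jumpFactor p z - jumpFactor q z| ≤ (z.1 + z.2) * dist p q := by
  obtain ⟨hz₁, n, hn⟩ := hz
  simp only [jumpFactor, hn, Real.rpow_natCast]
  have hexp_le : |Real.exp (-(q.1 * z.1))| ≤ 1 := by
    simpa using mul_nonneg hq.1.1 hz₁
  have hpow_le : |p.2 ^ n| ≤ 1 := by
    simpa [abs_of_nonneg hp.2.1] using pow_le_one₀ hp.2.1 hp.2.2
  have hexp : |Real.exp (-(p.1 * z.1)) - Real.exp (-(q.1 * z.1))| ≤ z.1 * dist p q :=
    (abs_exp_neg_mul_sub_le hp.1.1 hq.1.1 hz₁).trans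
      (mul_le_mul_of_nonneg_left (abs_fst_sub_le_dist p q) hz₁)
  have hpow : |p.2 ^ n - q.2 ^ n| ≤ n * dist p q := by
    have hmax : max |p.2| |q.2| ^ (n - 1) ≤ 1 := pow_le_one₀ (by positivity) <| max_le
      (by simpa [abs_of_nonneg hp.2.1] using hp.2.2) (by simpa [abs_of_nonneg hq.2.1] using hq.2.2)
    calc |p.2 ^ n - q.2 ^ n| ≤ |p.2 - q.2| * n * max |p.2| |q.2| ^ (n - 1) :=
          abs_pow_sub_pow_le _ _ _
      _ ≤ |p.2 - q.2| * n := mul_le_of_le_one_right (by positivity) hmax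
      _ ≤ n * dist p q := by
          rw [mul_comm]; exact mul_le_mul_of_nonneg_left (abs_snd_sub_le_dist p q) n.cast_nonneg
  calc |Real.exp (-(p.1 * z.1)) * p.2 ^ n - Real.exp (-(q.1 * z.1)) * q.2 ^ n|
      = |(Real.exp (-(p.1 * z.1)) - Real.exp (-(q.1 * z.1))) * p.2 ^ n
          + Real.exp (-(q.1 * z.1)) * (p.2 ^ n - q.2 ^ n)| := by ring_nf
    _ ≤ z.1 * dist p q + n * dist p q := by
        refine (abs_add_le _ _).trans (add_le_add ?_ ?_)
        · rw [abs_mul]; exact (mul_le_of_le_one_right (abs_nonneg _) hpow_le).trans hexp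
        · rw [abs_mul]; exact (mul_le_of_le_one_left (abs_nonneg _) hexp_le).trans hpow
    _ = (z.1 + n) * dist p q := by ring

lemma abs_jumpField₁_mk_zero_sub_le {x : ℝ} (hp : p ∈ strip R) (hq : q ∈ strip R) (hx : 0 ≤ x) :
    |jumpField₁ p (x, 0) - jumpField₁ q (x, 0)| ≤ (2 + R) * weight₁ (x, 0) * dist p q := by
  have hR : 0 ≤ R := hp.1.1.trans hp.1.2
  have hmem {r : ℝ} (hr : r ∈ Icc 0 R) : r * x ∈ Icc 0 (R * x) :=
    ⟨mul_nonneg hr.1 hx, mul_le_mul_of_nonneg_right hr.2 hx⟩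
  have hmin : min 1 (R * x) * x ≤ (2 + R) * min x (x ^ 2) := by
    rw [mul_min_of_nonneg _ _ (by linarith)]
    refine le_min ?_ ?_
    · nlinarith [min_le_left 1 (R * x)]
    · nlinarith [min_le_right 1 (R * x), sq_nonneg x]
  calc |jumpField₁ p (x, 0) - jumpField₁ q (x, 0)|
      = |(Real.exp (-(p.1 * x)) + p.1 * x) - (Real.exp (-(q.1 * x)) + q.1 * x)| := by
        simp only [jumpField₁, jumpFactor, Real.rpow_zero, mul_one]
        rw [← abs_neg]; ring_nf
    _ ≤ min 1 (R * x) * |p.1 * x - q.1 * x| := abs_exp_neg_add_sub_le (hmem hp.1) (hmem hq.1)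
    _ = min 1 (R * x) * x * |p.1 - q.1| := by
        rw [← sub_mul, abs_mul, abs_of_nonneg hx]; ring
    _ ≤ (2 + R) * min x (x ^ 2) * dist p q :=
        mul_le_mul hmin (abs_fst_sub_le_dist p q) (abs_nonneg _) (by positivity)
    _ = (2 + R) * weight₁ (x, 0) * dist p q := by simp only [weight₁, add_zero]

lemma abs_jumpField₁_sub_le (hp : p ∈ strip R) (hq : q ∈ strip R) (hz : z ∈ Mset) :
    |jumpField₁ p z - jumpField₁ q z| ≤ (2 + R) * weight₁ z * dist p q := by
  have hR : 0 ≤ R := hp.1.1.trans hp.1.2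
  obtain ⟨x, y⟩ := z
  obtain ⟨hx : 0 ≤ x, n, rfl : y = n⟩ := id hz
  rcases n.eq_zero_or_pos with rfl | hpos
  · simpa using abs_jumpField₁_mk_zero_sub_le hp hq hx
  have hn : (1 : ℝ) ≤ n := by exact_mod_cast hpos
  have hweight : x + (x + n) ≤ (2 + R) * weight₁ (x, n) := by
    have hw : x + (n : ℝ) / 2 ≤ weight₁ (x, n) := by
      rcases min_choice x (x ^ 2) with h | h <;> rw [weight₁, h] <;>
        nlinarith [sq_nonneg (x - 1 / 2)]
    nlinarith
  calc |jumpField₁ p (x, n) - jumpField₁ q (x, n)|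
      = |(q.1 - p.1) * x + (jumpFactor q (x, n) - jumpFactor p (x, n))| := by
        simp only [jumpField₁]; ring_nf
    _ ≤ dist p q * x + (x + n) * dist p q := by
        refine (abs_add_le _ _).trans (add_le_add ?_ ?_)
        · rw [abs_mul, abs_of_nonneg hx, abs_sub_comm]
          exact mul_le_mul_of_nonneg_right (abs_fst_sub_le_dist p q) hx
        · rw [abs_sub_comm]; exact abs_jumpFactor_sub_le hp hq hz
    _ = (x + (x + n)) * dist p q := by ring
    _ ≤ (2 + R) * weight₁ (x, n) * dist p q := mul_le_mul_of_nonneg_right hweight dist_nonneg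

lemma shift_mem_Mset (hz : z ∈ Mm1set) : (z.1, z.2 + 1) ∈ Mset := by
  obtain ⟨hz₁, n, hn, hzn⟩ := hz
  refine ⟨hz₁, (n + 1).toNat, ?_⟩
  rw [hzn, ← Int.cast_natCast, Int.toNat_of_nonneg (by lia)]
  push_cast; rfl

lemma abs_jumpField₂_mk_zero_sub_le {x : ℝ} (hp : p ∈ strip R) (hq : q ∈ strip R) (hx : 0 ≤ x) :
    |jumpField₂ p (x, 0) - jumpField₂ q (x, 0)| ≤ (3 + R) * weight₂ (x, 0) * dist p q := by
  have hR : 0 ≤ R := hp.1.1.trans hp.1.2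
  have hexp : |Real.exp (-(q.1 * x)) - 1| ≤ R * x := by
    have := abs_exp_neg_mul_sub_le hq.1.1 le_rfl hx
    rw [zero_mul, neg_zero, Real.exp_zero, sub_zero, abs_of_nonneg hq.1.1] at this
    nlinarith [hq.1.2]
  calc |jumpField₂ p (x, 0) - jumpField₂ q (x, 0)|
      = |(Real.exp (-(p.1 * x)) - Real.exp (-(q.1 * x))) * p.2
          + (Real.exp (-(q.1 * x)) - 1) * (p.2 - q.2)| := by
        simp only [jumpField₂, jumpFactor, zero_add, Real.rpow_one]; ring_nf
    _ ≤ x * dist p q * 1 + R * x * dist p q := by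
        refine (abs_add_le _ _).trans (add_le_add ?_ ?_) <;> rw [abs_mul]
        · refine mul_le_mul ((abs_exp_neg_mul_sub_le hp.1.1 hq.1.1 hx).trans ?_) ?_
            (abs_nonneg _) (by positivity)
          · exact mul_le_mul_of_nonneg_left (abs_fst_sub_le_dist p q) hx
          · rw [abs_of_nonneg hp.2.1]; exact hp.2.2
        · exact mul_le_mul hexp (abs_snd_sub_le_dist p q) (abs_nonneg _) (by positivity)
    _ = (1 + R) * x * dist p q := by ring
    _ ≤ (3 + R) * x * dist p q := by gcongr; norm_num
    _ = (3 + R) * weight₂ (x, 0) * dist p q := by simp only [weight₂, abs_zero, add_zero]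

lemma abs_jumpField₂_sub_le (hp : p ∈ strip R) (hq : q ∈ strip R) (hz : z ∈ Mm1set) :
    |jumpField₂ p z - jumpField₂ q z| ≤ (3 + R) * weight₂ z * dist p q := by
  have hR : 0 ≤ R := hp.1.1.trans hp.1.2
  obtain ⟨x, y⟩ := z
  obtain ⟨hx : 0 ≤ x, n, -, rfl : y = n⟩ := id hz
  by_cases hn : n = 0
  · simpa [hn] using abs_jumpField₂_mk_zero_sub_le hp hq hx
  have habs : 1 ≤ |(n : ℝ)| := by rw [← Int.cast_abs]; exact_mod_cast Int.one_le_abs hn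
  calc |jumpField₂ p (x, n) - jumpField₂ q (x, n)|
      = |(jumpFactor p (x, n + 1) - jumpFactor q (x, n + 1)) + (q.2 - p.2)| := by
        simp only [jumpField₂]; ring_nf
    _ ≤ (x + (n + 1)) * dist p q + dist p q := by
        refine (abs_add_le _ _).trans (add_le_add ?_ ?_)
        · exact abs_jumpFactor_sub_le hp hq (shift_mem_Mset hz)
        · rw [abs_sub_comm]; exact abs_snd_sub_le_dist p q
    _ = (x + n + 2) * dist p q := by ring
    _ ≤ (3 + R) * weight₂ (x, n) * dist p q := by
        refine mul_le_mul_of_nonneg_right ?_ dist_nonneg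
        rw [weight₂]; nlinarith [le_abs_self (n : ℝ)]

lemma jumpField₁_le_snd (hp : p ∈ strip R) (hz : z ∈ Mset) : jumpField₁ p z ≤ z.2 := by
  obtain ⟨x, y⟩ := z
  obtain ⟨hx : 0 ≤ x, n, rfl : y = n⟩ := hz
  rcases n.eq_zero_or_pos with rfl | hpos
  · have := Real.add_one_le_exp (-(p.1 * x))
    simp only [jumpField₁, jumpFactor, Nat.cast_zero, Real.rpow_zero]
    linarith
  · have hn : (1 : ℝ) ≤ n := by exact_mod_cast hpos
    have := (jumpFactor_mem_Icc (z := (x, n)) hp hx n.cast_nonneg).1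
    have := mul_nonneg hp.1.1 hx
    simp only [jumpField₁]
    linarith

end VectorField

section Field

open scoped NNReal

lemma weight₁_nonneg {z : ℝ × ℝ} (hz : z ∈ Mset) : 0 ≤ weight₁ z := by
  obtain ⟨hz₁, n, hn⟩ := hz
  exact add_nonneg (le_min hz₁ (sq_nonneg _)) (hn ▸ n.cast_nonneg)

lemma weight₂_nonneg {z : ℝ × ℝ} (hz : z ∈ Mm1set) : 0 ≤ weight₂ z :=
  add_nonneg hz.1 (abs_nonneg _)

lemma zero_one_mem_strip {R : ℝ} (hR : 0 ≤ R) : ((0, 1) : ℝ × ℝ) ∈ strip R := by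
  simp [hR]

lemma dist_zero_one_le {R : ℝ} {p : ℝ × ℝ} (hp : p ∈ strip R) : dist p (0, 1) ≤ R + 1 := by
  obtain ⟨⟨h₀, hR⟩, h₀', h₁⟩ := hp
  refine max_le ?_ ?_ <;> rw [Real.dist_eq, abs_le] <;> constructor <;> dsimp only <;> linarith

namespace BranchingMechanism

variable (B : BranchingMechanism) {R : ℝ} {p q : ℝ × ℝ}

/-- The vector field of the cumulant equations in the coordinates `p = (v₁, e^{-v₂})`. -/
def field (p : ℝ × ℝ) : ℝ × ℝ :=
  (-B.a11 * p.1 - B.alpha * p.1 ^ 2 + ∫ z, jumpField₁ p z ∂B.n1,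
    -B.a21 * (p.1 * p.2) + ∫ z, jumpField₂ p z ∂B.n2)

lemma ae_mem_Mset : ∀ᵐ z ∂B.n1, z ∈ Mset := B.n1_supp

lemma ae_mem_Mm1set : ∀ᵐ z ∂B.n2, z ∈ Mm1set := B.n2_supp

lemma integrable_weight₁ : Integrable weight₁ B.n1 :=
  ⟨by unfold weight₁; fun_prop, (hasFiniteIntegral_iff_ofReal
    (B.ae_mem_Mset.mono fun _ ↦ weight₁_nonneg)).2 B.n1_moment.lt_top⟩

lemma integrable_weight₂ : Integrable weight₂ B.n2 :=
  ⟨by unfold weight₂; fun_prop, (hasFiniteIntegral_iff_ofReal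
    (B.ae_mem_Mm1set.mono fun _ ↦ weight₂_nonneg)).2 B.n2_moment.lt_top⟩

lemma ae_snd_nonneg : ∀ᵐ z ∂B.n1, 0 ≤ z.2 :=
  B.ae_mem_Mset.mono fun _ ⟨_, n, hn⟩ ↦ hn ▸ n.cast_nonneg

lemma integrable_snd : Integrable (fun z : ℝ × ℝ ↦ z.2) B.n1 := by
  refine B.integrable_weight₁.mono' (by fun_prop) ?_
  filter_upwards [B.ae_mem_Mset, B.ae_snd_nonneg] with z hz hz₂
  rw [Real.norm_of_nonneg hz₂, weight₁]
  exact le_add_of_nonneg_left (le_min hz.1 (sq_nonneg _))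

variable {B}

lemma ae_abs_jumpField₁_le (hp : p ∈ strip R) :
    ∀ᵐ z ∂B.n1, |jumpField₁ p z| ≤ (2 + R) * (R + 1) * weight₁ z := by
  filter_upwards [B.ae_mem_Mset] with z hz
  have hR := hp.1.1.trans hp.1.2
  have hlip := abs_jumpField₁_sub_le hp (zero_one_mem_strip hR) hz
  rw [jumpField₁_zero_one, sub_zero] at hlip
  calc |jumpField₁ p z| ≤ (2 + R) * weight₁ z * dist p (0, 1) := hlip
    _ ≤ (2 + R) * weight₁ z * (R + 1) := mul_le_mul_of_nonneg_left (dist_zero_one_le hp)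
        (mul_nonneg (by positivity) (weight₁_nonneg hz))
    _ = (2 + R) * (R + 1) * weight₁ z := by ring

lemma ae_abs_jumpField₂_le (hp : p ∈ strip R) :
    ∀ᵐ z ∂B.n2, |jumpField₂ p z| ≤ (3 + R) * (R + 1) * weight₂ z := by
  filter_upwards [B.ae_mem_Mm1set] with z hz
  have hR := hp.1.1.trans hp.1.2
  have hlip := abs_jumpField₂_sub_le hp (zero_one_mem_strip hR) hz
  rw [jumpField₂_zero_one, sub_zero] at hlip
  calc |jumpField₂ p z| ≤ (3 + R) * weight₂ z * dist p (0, 1) := hlip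
    _ ≤ (3 + R) * weight₂ z * (R + 1) := mul_le_mul_of_nonneg_left (dist_zero_one_le hp)
        (mul_nonneg (by positivity) (weight₂_nonneg hz))
    _ = (3 + R) * (R + 1) * weight₂ z := by ring

lemma integrable_jumpField₁ (hp : p ∈ strip R) : Integrable (jumpField₁ p) B.n1 :=
  (B.integrable_weight₁.const_mul _).mono' (by fun_prop) (ae_abs_jumpField₁_le hp)

lemma integrable_jumpField₂ (hp : p ∈ strip R) : Integrable (jumpField₂ p) B.n2 :=
  (B.integrable_weight₂.const_mul _).mono' (by fun_prop) (ae_abs_jumpField₂_le hp)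

lemma abs_integral_jumpField₁_sub_le (hp : p ∈ strip R) (hq : q ∈ strip R) :
    |∫ z, jumpField₁ p z ∂B.n1 - ∫ z, jumpField₁ q z ∂B.n1| ≤
      (2 + R) * (∫ z, weight₁ z ∂B.n1) * dist p q := by
  rw [← integral_sub (integrable_jumpField₁ hp) (integrable_jumpField₁ hq),
    ← integral_const_mul, ← integral_mul_const, ← Real.norm_eq_abs]
  refine norm_integral_le_of_norm_le ((B.integrable_weight₁.const_mul _).mul_const _) ?_
  filter_upwards [B.ae_mem_Mset] with z hz using abs_jumpField₁_sub_le hp hq hz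

lemma abs_integral_jumpField₂_sub_le (hp : p ∈ strip R) (hq : q ∈ strip R) :
    |∫ z, jumpField₂ p z ∂B.n2 - ∫ z, jumpField₂ q z ∂B.n2| ≤
      (3 + R) * (∫ z, weight₂ z ∂B.n2) * dist p q := by
  rw [← integral_sub (integrable_jumpField₂ hp) (integrable_jumpField₂ hq),
    ← integral_const_mul, ← integral_mul_const, ← Real.norm_eq_abs]
  refine norm_integral_le_of_norm_le ((B.integrable_weight₂.const_mul _).mul_const _) ?_
  filter_upwards [B.ae_mem_Mm1set] with z hz using abs_jumpField₂_sub_le hp hq hz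

lemma abs_field_fst_sub_le (hp : p ∈ strip R) (hq : q ∈ strip R) :
    |(B.field p).1 - (B.field q).1| ≤
      (|B.a11| + B.alpha * (2 * R) + (2 + R) * ∫ z, weight₁ z ∂B.n1) * dist p q := by
  have hα := B.alpha_nonneg
  have hR := hp.1.1.trans hp.1.2
  have hsum : |p.1 + q.1| ≤ 2 * R := by
    rw [abs_of_nonneg (add_nonneg hp.1.1 hq.1.1)]; linarith [hp.1.2, hq.1.2]
  calc |(B.field p).1 - (B.field q).1|
      = |(-B.a11 * (p.1 - q.1) + -B.alpha * ((p.1 + q.1) * (p.1 - q.1)))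
          + (∫ z, jumpField₁ p z ∂B.n1 - ∫ z, jumpField₁ q z ∂B.n1)| := by
        simp only [field]; ring_nf
    _ ≤ |B.a11| * dist p q + B.alpha * (2 * R * dist p q)
          + (2 + R) * (∫ z, weight₁ z ∂B.n1) * dist p q := by
        refine (abs_add_le _ _).trans (add_le_add ((abs_add_le _ _).trans ?_)
          (abs_integral_jumpField₁_sub_le hp hq))
        rw [abs_mul, abs_mul, abs_mul, abs_neg, abs_neg, abs_of_nonneg hα]
        have := abs_fst_sub_le_dist p q
        gcongr
    _ = _ := by ring

lemma abs_field_snd_sub_le (hp : p ∈ strip R) (hq : q ∈ strip R) :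
    |(B.field p).2 - (B.field q).2| ≤
      (B.a21 * (1 + R) + (3 + R) * ∫ z, weight₂ z ∂B.n2) * dist p q := by
  have ha := B.a21_nonneg
  have hp₂ : |p.2| ≤ 1 := by rw [abs_of_nonneg hp.2.1]; exact hp.2.2
  have hq₁ : |q.1| ≤ R := by rw [abs_of_nonneg hq.1.1]; exact hq.1.2
  have hprod : |(p.1 - q.1) * p.2 + q.1 * (p.2 - q.2)| ≤ dist p q * 1 + R * dist p q := by
    refine (abs_add_le _ _).trans (add_le_add ?_ ?_) <;> rw [abs_mul]
    · exact mul_le_mul (abs_fst_sub_le_dist p q) hp₂ (abs_nonneg _) dist_nonneg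
    · exact mul_le_mul hq₁ (abs_snd_sub_le_dist p q) (abs_nonneg _) (hq.1.1.trans hq.1.2)
  calc |(B.field p).2 - (B.field q).2|
      = |-B.a21 * ((p.1 - q.1) * p.2 + q.1 * (p.2 - q.2))
          + (∫ z, jumpField₂ p z ∂B.n2 - ∫ z, jumpField₂ q z ∂B.n2)| := by
        simp only [field]; ring_nf
    _ ≤ B.a21 * (dist p q * 1 + R * dist p q)
          + (3 + R) * (∫ z, weight₂ z ∂B.n2) * dist p q := by
        refine (abs_add_le _ _).trans (add_le_add ?_ (abs_integral_jumpField₂_sub_le hp hq))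
        rw [abs_mul, abs_neg, abs_of_nonneg ha]
        gcongr
    _ = _ := by ring

variable (B) in
theorem exists_lipschitzOnWith_field (R : ℝ) : ∃ K : ℝ≥0, LipschitzOnWith K B.field (strip R) := by
  have hcoe (c : ℝ) (p q : ℝ × ℝ) : c * dist p q ≤ c.toNNReal * dist p q :=
    mul_le_mul_of_nonneg_right (Real.le_coe_toNNReal c) dist_nonneg
  exact ⟨_, (LipschitzOnWith.of_dist_le_mul fun p hp q hq ↦
      (abs_field_fst_sub_le hp hq).trans (hcoe _ p q)).prodMk
    (LipschitzOnWith.of_dist_le_mul fun p hp q hq ↦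
      (abs_field_snd_sub_le hp hq).trans (hcoe _ p q))⟩

variable (B) in
lemma continuousOn_field : ContinuousOn B.field halfStrip := by
  intro p hp
  obtain ⟨K, hK⟩ := B.exists_lipschitzOnWith_field (p.1 + 1)
  refine (hK.continuousOn p ⟨⟨hp.1, by linarith⟩, hp.2⟩).mono_of_mem_nhdsWithin ?_
  filter_upwards [self_mem_nhdsWithin, nhdsWithin_le_nhds
    (continuous_fst.continuousAt.eventually_lt_const (lt_add_one p.1))] with q hq hqp
    using ⟨⟨hq.1, hqp.le⟩, hq.2⟩

variable (B) in
lemma field_fst_le (hp : p ∈ strip R) :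
    (B.field p).1 ≤ |B.a11| * p.1 + ∫ z, z.2 ∂B.n1 := by
  have hjump : ∫ z, jumpField₁ p z ∂B.n1 ≤ ∫ z, z.2 ∂B.n1 :=
    integral_mono_ae (integrable_jumpField₁ hp) B.integrable_snd
      (B.ae_mem_Mset.mono fun z hz ↦ jumpField₁_le_snd hp hz)
  have ha := mul_le_mul_of_nonneg_right (neg_le_abs B.a11) hp.1.1
  have hα := mul_nonneg B.alpha_nonneg (sq_nonneg p.1)
  simp only [field]
  linarith

end BranchingMechanism

/-- The change of coordinates `v ↦ (v₁, e^{-v₂})`, which makes the cumulant equations regular. -/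
def toStrip (v : ℝ × ℝ) : ℝ × ℝ := (v.1, Real.exp (-v.2))

@[fun_prop]
lemma continuous_toStrip : Continuous toStrip := by
  unfold toStrip; fun_prop

lemma toStrip_mem_strip {v : ℝ × ℝ} {R : ℝ} (hv : 0 ≤ v) (hR : v.1 ≤ R) : toStrip v ∈ strip R :=
  ⟨⟨hv.1, hR⟩, Real.exp_nonneg _, Real.exp_le_one_iff.2 (neg_nonpos.2 hv.2)⟩

lemma jumpFactor_toStrip (v z : ℝ × ℝ) :
    jumpFactor (toStrip v) z = Real.exp (-(v.1 * z.1 + v.2 * z.2)) := by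
  rw [jumpFactor, toStrip, ← Real.exp_mul, ← Real.exp_add]
  ring_nf

variable {B : BranchingMechanism}

lemma field_toStrip_fst (v : ℝ × ℝ) : (B.field (toStrip v)).1 = mPhi1 B v := by
  simp only [BranchingMechanism.field, mPhi1, jumpField₁, jumpFactor_toStrip, sub_eq_add_neg _
    (∫ _, _ ∂_), ← integral_neg]
  congr 1
  refine integral_congr_ae (ae_of_all _ fun z ↦ ?_)
  simp only [toStrip]
  ring

lemma field_toStrip_snd (v : ℝ × ℝ) :
    (B.field (toStrip v)).2 = -Real.exp (-v.2) * mPhi2 B v := by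
  have hjump : ∫ z, jumpField₂ (toStrip v) z ∂B.n2 =
      -Real.exp (-v.2) * ∫ z, (1 - Real.exp (-(v.1 * z.1 + v.2 * z.2))) ∂B.n2 := by
    rw [← integral_const_mul]
    refine integral_congr_ae (ae_of_all _ fun z ↦ ?_)
    simp only [jumpField₂, jumpFactor_toStrip]
    rw [toStrip, mul_sub, mul_one, neg_mul, ← Real.exp_add]
    ring_nf
  simp only [BranchingMechanism.field, mPhi2, hjump]
  rw [toStrip]
  ring

lemma hasDerivWithinAt_of_eq_add_integral {f F : ℝ → ℝ} {c : ℝ} (hf : ContinuousOn f (Ici 0))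
    (hF : ∀ t, 0 ≤ t → F t = c + ∫ s in (0 : ℝ)..t, f s) {t : ℝ} (ht : 0 ≤ t) :
    HasDerivWithinAt F (f t) (Ici 0) t := by
  have hcont : Continuous fun s ↦ f (max 0 s) :=
    hf.comp_continuous (by fun_prop) fun s ↦ mem_Ici.2 (le_max_left _ _)
  have hF' (t : ℝ) (ht : t ∈ Ici 0) : F t = c + ∫ s in (0 : ℝ)..t, f (max 0 s) := by
    rw [hF t ht]
    congr 1
    refine intervalIntegral.integral_congr fun s hs ↦ ?_
    rw [uIcc_of_le ht] at hs
    simp only [max_eq_right hs.1]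
  have hderiv := ((hcont.integral_hasStrictDerivAt 0 t).hasDerivAt.const_add c).hasDerivWithinAt
    (s := Ici 0) |>.congr hF' (hF' t ht)
  rwa [max_eq_right ht] at hderiv

namespace SolvesCumulant

variable {l : ℝ × ℝ} {V : ℝ → ℝ × ℝ}

lemma apply_zero (hV : SolvesCumulant B l V) : V 0 = l := by
  have := hV.2.2 0 le_rfl
  simp only [intervalIntegral.integral_same, add_zero] at this
  exact Prod.ext this.1 this.2

lemma nonneg (hV : SolvesCumulant B l V) {t : ℝ} (ht : 0 ≤ t) : 0 ≤ V t := hV.2.1 t ht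

theorem hasDerivWithinAt (hV : SolvesCumulant B l V) {t : ℝ} (ht : 0 ≤ t) :
    HasDerivWithinAt V (mPhi1 B (V t), mPhi2 B (V t)) (Ici 0) t := by
  have hfield : ContinuousOn (fun s ↦ B.field (toStrip (V s))) (Ici 0) :=
    B.continuousOn_field.comp (continuous_toStrip.comp_continuousOn hV.1) fun s hs ↦
      have := toStrip_mem_strip (hV.nonneg hs) le_rfl
      ⟨this.1.1, this.2⟩
  have hPhi₁ : ContinuousOn (fun s ↦ mPhi1 B (V s)) (Ici 0) := by
    simpa only [field_toStrip_fst] using hfield.fst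
  have hPhi₂ : ContinuousOn (fun s ↦ mPhi2 B (V s)) (Ici 0) := by
    have hmul : ContinuousOn (fun s ↦ -Real.exp (V s).2 * (B.field (toStrip (V s))).2) (Ici 0) :=
      (Real.continuous_exp.comp_continuousOn hV.1.snd).neg.mul hfield.snd
    refine hmul.congr fun s _ ↦ ?_
    simp only [field_toStrip_snd]
    rw [← mul_assoc, neg_mul_neg, ← Real.exp_add, add_neg_cancel, Real.exp_zero, one_mul]
  exact (hasDerivWithinAt_of_eq_add_integral hPhi₁ (fun s hs ↦ (hV.2.2 s hs).1) ht).prodMk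
    (hasDerivWithinAt_of_eq_add_integral hPhi₂ (fun s hs ↦ (hV.2.2 s hs).2) ht)

lemma hasDerivWithinAt_toStrip (hV : SolvesCumulant B l V) {t : ℝ} (ht : 0 ≤ t) :
    HasDerivWithinAt (fun s ↦ toStrip (V s)) (B.field (toStrip (V t))) (Ici 0) t := by
  have hderiv := hV.hasDerivWithinAt ht
  have hfst : HasDerivWithinAt (fun s ↦ (V s).1) (mPhi1 B (V t)) (Ici 0) t := hderiv.fst
  have hsnd : HasDerivWithinAt (fun s ↦ (V s).2) (mPhi2 B (V t)) (Ici 0) t := hderiv.snd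
  refine (hfst.prodMk hsnd.fun_neg.exp).congr_deriv (Prod.ext (field_toStrip_fst _).symm ?_)
  rw [field_toStrip_snd, neg_mul, mul_neg]

end SolvesCumulant

end Field

section Truncation

/-- The measure `n` with the jumps smaller than `δ` replaced by jumps `(δ, 0)` at rate `c`. -/
def cutoff (n : Measure (ℝ × ℝ)) (δ c : ℝ) : Measure (ℝ × ℝ) :=
  n.restrict (Metric.ball 0 δ)ᶜ + c.toNNReal • Measure.dirac (δ, 0)

section Cutoff

variable {n : Measure (ℝ × ℝ)} {δ c : ℝ}

lemma ae_cutoff {P : ℝ × ℝ → Prop} (hn : ∀ᵐ z ∂n, P z) (hδ : P (δ, 0)) :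
    ∀ᵐ z ∂cutoff n δ c, P z := by
  refine ae_add_measure_iff.2 ⟨ae_restrict_of_ae hn, Measure.ae_smul_measure ?_ _⟩
  rw [ae_dirac_eq]
  exact hδ

lemma lintegral_cutoff_ne_top {f : ℝ × ℝ → ℝ} (hf : ∫⁻ z, ENNReal.ofReal (f z) ∂n ≠ ⊤) :
    ∫⁻ z, ENNReal.ofReal (f z) ∂cutoff n δ c ≠ ⊤ := by
  rw [cutoff, lintegral_add_measure, lintegral_smul_measure, lintegral_dirac]
  exact ENNReal.add_ne_top.2 ⟨((setLIntegral_le_lintegral _ _).trans_lt hf.lt_top).ne,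
    (ENNReal.mul_lt_top ENNReal.coe_lt_top ENNReal.ofReal_lt_top).ne⟩

lemma isFiniteMeasure_cutoff {w : ℝ × ℝ → ℝ} {ε : ℝ} (hw : Integrable w n) (hε : 0 < ε)
    (hlarge : ∀ᵐ z ∂n, δ ≤ ‖z‖ → ε ≤ w z) : IsFiniteMeasure (cutoff n δ c) := by
  have hfinite : n (Metric.ball 0 δ)ᶜ < ⊤ := by
    refine (measure_mono_ae ?_).trans_lt (hw.measure_norm_ge_lt_top hε)
    filter_upwards [hlarge] with z hz hzδ
    exact (hz (by simpa [mem_ball_zero_iff] using notMem_of_mem_compl hzδ)).trans (le_abs_self _)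
  have : IsFiniteMeasure (n.restrict (Metric.ball 0 δ)ᶜ) := ⟨by simpa using hfinite⟩
  unfold cutoff
  infer_instance

lemma integral_cutoff {f : ℝ × ℝ → ℝ} (hf : Integrable f n) (hc : 0 ≤ c) :
    ∫ z, f z ∂cutoff n δ c =
      (∫ z, f z ∂n - ∫ z in Metric.ball 0 δ, f z ∂n) + c * f (δ, 0) := by
  rw [cutoff, integral_add_measure hf.restrict
      ((integrable_dirac (by simp)).smul_measure_nnreal), integral_smul_nnreal_measure,
    integral_dirac, setIntegral_compl Metric.isOpen_ball.measurableSet hf, NNReal.smul_def,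
    Real.coe_toNNReal c hc, smul_eq_mul]

lemma tendsto_setIntegral_ball {w : ℝ × ℝ → ℝ} (hw : Integrable w n) (hn : n {0} = 0) :
    Tendsto (fun k : ℕ ↦ ∫ z in Metric.ball 0 (1 / (k + 1 : ℝ)), w z ∂n) atTop (𝓝 0) := by
  have hinter : ⋂ k : ℕ, Metric.ball (0 : ℝ × ℝ) (1 / (k + 1 : ℝ)) = {0} := by
    refine Subset.antisymm (fun z hz ↦ ?_) (by simp [Nat.cast_add_one_pos])
    exact norm_le_zero_iff.1 <| ge_of_tendsto' tendsto_one_div_add_atTop_nhds_zero_nat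
      fun k ↦ (mem_ball_zero_iff.1 (mem_iInter.1 hz k)).le
  have hlim := tendsto_setIntegral_of_antitone
    (s := fun k : ℕ ↦ Metric.ball (0 : ℝ × ℝ) (1 / (k + 1 : ℝ)))
    (fun k ↦ Metric.isOpen_ball.measurableSet)
    (fun i j hij ↦ Metric.ball_subset_ball (Nat.one_div_le_one_div hij)) ⟨0, hw.integrableOn⟩
  rwa [hinter, setIntegral_measure_zero _ hn] at hlim

end Cutoff

lemma sq_le_weight₁ {z : ℝ × ℝ} {δ : ℝ} (hδ : 0 < δ) (hδ₁ : δ ≤ 1) (hz : z ∈ Mset)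
    (hzδ : δ ≤ ‖z‖) : δ ^ 2 ≤ weight₁ z := by
  obtain ⟨hz₁, n, hn⟩ := hz
  have hmin : 0 ≤ min z.1 (z.1 ^ 2) := le_min hz₁ (sq_nonneg _)
  rw [weight₁, hn]
  rcases n.eq_zero_or_pos with rfl | hpos
  · have hzδ₁ : δ ≤ z.1 := by
      rw [Prod.norm_def, hn, Real.norm_of_nonneg hz₁] at hzδ
      simpa [hz₁] using hzδ
    simpa using ⟨by nlinarith, pow_le_pow_left₀ hδ.le hzδ₁ 2⟩
  · have hn₁ : (1 : ℝ) ≤ n := by exact_mod_cast hpos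
    nlinarith

lemma norm_le_weight₂ {z : ℝ × ℝ} (hz : z ∈ Mm1set) : ‖z‖ ≤ weight₂ z := by
  rw [Prod.norm_def, Real.norm_of_nonneg hz.1, Real.norm_eq_abs, weight₂]
  exact max_le_add_of_nonneg hz.1 (abs_nonneg _)

lemma div_mem_Icc {r m R : ℝ} (hr : r ∈ Icc 0 R) (hm : 0 < m) (hRm : R ≤ m) : r / m ∈ Icc 0 1 :=
  ⟨div_nonneg hr.1 hm.le, (div_le_one hm).2 (hr.2.trans hRm)⟩

lemma abs_two_mul_sq_mul_jumpField₁_add_le {R m : ℝ} {p : ℝ × ℝ} (hp : p ∈ strip R) (hm : 0 < m)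
    (hRm : R ≤ m) : |2 * m ^ 2 * jumpField₁ p (1 / m, 0) + p.1 ^ 2| ≤ R ^ 3 * (1 / m) := by
  obtain ⟨hu₀, hu₁⟩ := div_mem_Icc hp.1 hm hRm
  have hexp := Real.exp_bound (x := -(p.1 / m)) (by rwa [abs_neg, abs_of_nonneg hu₀])
    (n := 3) (by norm_num)
  rw [abs_neg, abs_of_nonneg hu₀] at hexp
  have hjump : 2 * m ^ 2 * jumpField₁ p (1 / m, 0) + p.1 ^ 2 = -(2 * m ^ 2 *
      (Real.exp (-(p.1 / m)) - ∑ i ∈ Finset.range 3, (-(p.1 / m)) ^ i / i.factorial)) := by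
    simp only [jumpField₁, jumpFactor, Finset.sum_range_succ, Finset.sum_range_zero,
      Nat.factorial, Real.rpow_zero, mul_one_div]
    field_simp
    push_cast
    ring
  rw [hjump, abs_neg, abs_mul, abs_of_pos (by positivity)]
  calc 2 * m ^ 2 * |Real.exp (-(p.1 / m)) - _|
      ≤ 2 * m ^ 2 * ((p.1 / m) ^ 3 * ((3 : ℕ).succ / ((3 : ℕ).factorial * (3 : ℕ)))) := by gcongr
    _ = 4 / 9 * p.1 ^ 3 * (1 / m) := by
        simp only [Nat.factorial]
        field_simp
        norm_num
        ring
    _ ≤ R ^ 3 * (1 / m) := by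
        have := pow_le_pow_left₀ hp.1.1 hp.1.2 3
        have := pow_nonneg hp.1.1 3
        gcongr
        linarith

lemma abs_mul_jumpField₂_add_le {R m : ℝ} {p : ℝ × ℝ} (hp : p ∈ strip R) (hm : 0 < m)
    (hRm : R ≤ m) : |m * jumpField₂ p (1 / m, 0) + p.1 * p.2| ≤ R ^ 2 * (1 / m) := by
  obtain ⟨hu₀, hu₁⟩ := div_mem_Icc hp.1 hm hRm
  have hexp := Real.abs_exp_sub_one_sub_id_le (x := -(p.1 / m))
    (by rwa [abs_neg, abs_of_nonneg hu₀])
  have hjump : m * jumpField₂ p (1 / m, 0) + p.1 * p.2 =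
      m * p.2 * (Real.exp (-(p.1 / m)) - 1 - -(p.1 / m)) := by
    simp only [jumpField₂, jumpFactor, zero_add, Real.rpow_one, mul_one_div]
    field_simp
    ring
  rw [hjump, abs_mul, abs_of_nonneg (mul_nonneg hm.le hp.2.1)]
  calc m * p.2 * |Real.exp (-(p.1 / m)) - 1 - -(p.1 / m)|
      ≤ m * 1 * (-(p.1 / m)) ^ 2 := by gcongr; exact hp.2.2
    _ = p.1 ^ 2 * (1 / m) := by field_simp
    _ ≤ R ^ 2 * (1 / m) := by gcongr; exacts [hp.1.1, hp.1.2]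

namespace BranchingMechanism

variable (B : BranchingMechanism)

/-- A branching mechanism without continuous motion and with finitely many jumps per unit time. -/
structure HasFiniteActivity : Prop where
  a21_eq_zero : B.a21 = 0
  alpha_eq_zero : B.alpha = 0
  isFiniteMeasure₁ : IsFiniteMeasure B.n1
  isFiniteMeasure₂ : IsFiniteMeasure B.n2

/-- The finite activity approximation of `B` in which the jumps smaller than `δ = 1 / (k + 1)` are
removed, while the quadratic term `αλ₁²` and the drift `a₂₁λ₁` are replaced by jumps `(δ, 0)` with
the same second, respectively first, moment. -/
def truncate (k : ℕ) : BranchingMechanism where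
  a11 := B.a11
  a21 := 0
  alpha := 0
  a21_nonneg := le_rfl
  alpha_nonneg := le_rfl
  n1 := cutoff B.n1 (1 / (k + 1)) (2 * B.alpha * (k + 1) ^ 2)
  n2 := cutoff B.n2 (1 / (k + 1)) (B.a21 * (k + 1))
  n1_sigmaFinite := by have := B.n1_sigmaFinite; unfold cutoff; infer_instance
  n2_sigmaFinite := by have := B.n2_sigmaFinite; unfold cutoff; infer_instance
  n1_supp := ae_cutoff B.ae_mem_Mset ⟨by positivity, 0, by simp⟩
  n2_supp := ae_cutoff B.ae_mem_Mm1set ⟨by positivity, 0, by simp⟩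
  n1_zero := compl_mem_ae_iff.1 <|
    ae_cutoff (compl_mem_ae_iff.2 B.n1_zero) (by simp [Nat.cast_add_one_ne_zero])
  n2_zero := compl_mem_ae_iff.1 <|
    ae_cutoff (compl_mem_ae_iff.2 B.n2_zero) (by simp [Nat.cast_add_one_ne_zero])
  n2_neg1 :=
    have := isFiniteMeasure_cutoff (c := B.a21 * (k + 1)) B.integrable_weight₂
      (Nat.one_div_pos_of_nat (n := k) (α := ℝ))
      (B.ae_mem_Mm1set.mono fun _ hz hzδ ↦ hzδ.trans (norm_le_weight₂ hz))
    measure_ne_top _ _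
  n1_moment := lintegral_cutoff_ne_top B.n1_moment
  n2_moment := lintegral_cutoff_ne_top B.n2_moment

lemma hasFiniteActivity_truncate (k : ℕ) : (B.truncate k).HasFiniteActivity where
  a21_eq_zero := rfl
  alpha_eq_zero := rfl
  isFiniteMeasure₁ := by
    have hδ : 0 < 1 / (k + 1 : ℝ) := Nat.one_div_pos_of_nat
    refine isFiniteMeasure_cutoff B.integrable_weight₁ (sq_pos_of_pos hδ) ?_
    filter_upwards [B.ae_mem_Mset] with z hz using
      sq_le_weight₁ hδ (by simpa using Nat.one_div_le_one_div (α := ℝ) k.zero_le) hz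
  isFiniteMeasure₂ := isFiniteMeasure_cutoff B.integrable_weight₂ Nat.one_div_pos_of_nat
    (B.ae_mem_Mm1set.mono fun _ hz hzδ ↦ hzδ.trans (norm_le_weight₂ hz))

lemma integral_snd_truncate_le (k : ℕ) : ∫ z, z.2 ∂(B.truncate k).n1 ≤ ∫ z, z.2 ∂B.n1 := by
  have hball : 0 ≤ ∫ z in Metric.ball 0 (1 / (k + 1 : ℝ)), z.2 ∂B.n1 :=
    integral_nonneg_of_ae (ae_restrict_of_ae B.ae_snd_nonneg)
  have hα := B.alpha_nonneg
  change ∫ z, z.2 ∂cutoff B.n1 _ _ ≤ _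
  rw [integral_cutoff B.integrable_snd (by positivity)]
  simpa using hball

variable {B} {R : ℝ} {p : ℝ × ℝ} {k : ℕ}

lemma abs_field_truncate_fst_sub_le (hp : p ∈ strip R) (hk : R ≤ k + 1) :
    |((B.truncate k).field p).1 - (B.field p).1| ≤
      (2 + R) * (R + 1) * (∫ z in Metric.ball 0 (1 / (k + 1 : ℝ)), weight₁ z ∂B.n1) +
        B.alpha * R ^ 3 * (1 / (k + 1 : ℝ)) := by
  have ha := B.alpha_nonneg
  have hball : |∫ z in Metric.ball 0 (1 / (k + 1 : ℝ)), jumpField₁ p z ∂B.n1| ≤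
      (2 + R) * (R + 1) * ∫ z in Metric.ball 0 (1 / (k + 1 : ℝ)), weight₁ z ∂B.n1 := by
    rw [← integral_const_mul, ← Real.norm_eq_abs]
    exact norm_integral_le_of_norm_le (B.integrable_weight₁.const_mul _).restrict
      (ae_restrict_of_ae (ae_abs_jumpField₁_le hp))
  have hdirac := mul_le_mul_of_nonneg_left
    (abs_two_mul_sq_mul_jumpField₁_add_le hp k.cast_add_one_pos hk) ha
  calc |((B.truncate k).field p).1 - (B.field p).1|
      = |-(∫ z in Metric.ball 0 (1 / (k + 1 : ℝ)), jumpField₁ p z ∂B.n1)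
          + B.alpha * (2 * (k + 1 : ℝ) ^ 2 * jumpField₁ p (1 / (k + 1), 0) + p.1 ^ 2)| := by
        simp only [field, truncate]
        rw [integral_cutoff (integrable_jumpField₁ hp) (by positivity)]
        congr 1
        ring
    _ ≤ _ := by
        refine (abs_add_le _ _).trans (add_le_add ((abs_neg _).trans_le hball) ?_)
        rwa [abs_mul, abs_of_nonneg ha, mul_assoc B.alpha]

lemma abs_field_truncate_snd_sub_le (hp : p ∈ strip R) (hk : R ≤ k + 1) :
    |((B.truncate k).field p).2 - (B.field p).2| ≤
      (3 + R) * (R + 1) * (∫ z in Metric.ball 0 (1 / (k + 1 : ℝ)), weight₂ z ∂B.n2) +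
        B.a21 * R ^ 2 * (1 / (k + 1 : ℝ)) := by
  have ha := B.a21_nonneg
  have hball : |∫ z in Metric.ball 0 (1 / (k + 1 : ℝ)), jumpField₂ p z ∂B.n2| ≤
      (3 + R) * (R + 1) * ∫ z in Metric.ball 0 (1 / (k + 1 : ℝ)), weight₂ z ∂B.n2 := by
    rw [← integral_const_mul, ← Real.norm_eq_abs]
    exact norm_integral_le_of_norm_le (B.integrable_weight₂.const_mul _).restrict
      (ae_restrict_of_ae (ae_abs_jumpField₂_le hp))
  have hdirac := mul_le_mul_of_nonneg_left
    (abs_mul_jumpField₂_add_le hp k.cast_add_one_pos hk) ha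
  calc |((B.truncate k).field p).2 - (B.field p).2|
      = |-(∫ z in Metric.ball 0 (1 / (k + 1 : ℝ)), jumpField₂ p z ∂B.n2)
          + B.a21 * ((k + 1 : ℝ) * jumpField₂ p (1 / (k + 1), 0) + p.1 * p.2)| := by
        simp only [field, truncate]
        rw [integral_cutoff (integrable_jumpField₂ hp) (by positivity)]
        congr 1
        ring
    _ ≤ _ := by
        refine (abs_add_le _ _).trans (add_le_add ((abs_neg _).trans_le hball) ?_)
        rwa [abs_mul, abs_of_nonneg ha, mul_assoc B.a21]

variable (B) in
theorem tendstoUniformlyOn_field_truncate (R : ℝ) :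
    TendstoUniformlyOn (fun k ↦ (B.truncate k).field) B.field atTop (strip R) := by
  have hδ := tendsto_one_div_add_atTop_nhds_zero_nat (𝕜 := ℝ)
  have h₁ := ((tendsto_setIntegral_ball B.integrable_weight₁ B.n1_zero).const_mul
    ((2 + R) * (R + 1))).add (hδ.const_mul (B.alpha * R ^ 3))
  have h₂ := ((tendsto_setIntegral_ball B.integrable_weight₂ B.n2_zero).const_mul
    ((3 + R) * (R + 1))).add (hδ.const_mul (B.a21 * R ^ 2))
  rw [mul_zero, mul_zero, add_zero] at h₁ h₂
  refine Metric.tendstoUniformlyOn_iff.2 fun ε hε ↦ ?_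
  filter_upwards [h₁.eventually_lt_const hε, h₂.eventually_lt_const hε,
    (tendsto_atTop_add_const_right _ 1 tendsto_natCast_atTop_atTop).eventually_ge_atTop R]
    with k hk₁ hk₂ hk p hp
  rw [dist_comm]
  exact max_lt ((abs_field_truncate_fst_sub_le hp hk).trans_lt hk₁)
    ((abs_field_truncate_snd_sub_le hp hk).trans_lt hk₂)

end BranchingMechanism

end Truncation

section Euler

open scoped NNReal

variable {E : Type*} [NormedAddCommGroup E] [NormedSpace ℝ E] {f g : E → E} {S : Set E} {K : ℝ≥0}
  {M η a b h : ℝ} {v : ℝ → E}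

/-- One step of length `h` of the explicit Euler scheme for `x' = f x`. -/
def eulerStep (f : E → E) (h : ℝ) (x : E) : E := x + h • f x

lemma norm_sub_eulerStep_le (hf : LipschitzOnWith K f S) (hvS : MapsTo v (Icc a b) S)
    (hv : ∀ s ∈ Icc a b, HasDerivWithinAt v (f (v s)) (Icc a b) s)
    (hM : ∀ s ∈ Icc a b, ‖f (v s)‖ ≤ M) (hab : a ≤ b) :
    ‖v b - eulerStep f (b - a) (v a)‖ ≤ K * M * (b - a) * (b - a) := by
  have ha : a ∈ Icc a b := left_mem_Icc.2 hab
  have hM₀ : 0 ≤ M := (norm_nonneg _).trans (hM a ha)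
  have hspeed := norm_image_sub_le_of_norm_deriv_le_segment' hv
    fun s hs ↦ hM s (Ico_subset_Icc_self hs)
  have hderiv (s : ℝ) (hs : s ∈ Icc a b) :
      HasDerivWithinAt (fun s ↦ v s - (s - a) • f (v a)) (f (v s) - f (v a)) (Icc a b) s := by
    simpa using (hv s hs).fun_sub (((hasDerivWithinAt_id s _).sub_const a).smul_const (f (v a)))
  have hslope (s : ℝ) (hs : s ∈ Ico a b) : ‖f (v s) - f (v a)‖ ≤ K * M * (b - a) := by
    have hs' := Ico_subset_Icc_self hs
    calc ‖f (v s) - f (v a)‖ ≤ K * ‖v s - v a‖ := hf.norm_sub_le (hvS hs') (hvS ha)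
      _ ≤ K * (M * (s - a)) := by gcongr; exact hspeed s hs'
      _ ≤ K * (M * (b - a)) := by gcongr; exact hs'.2
      _ = K * M * (b - a) := by ring
  have := norm_image_sub_le_of_norm_deriv_le_segment' hderiv hslope b (right_mem_Icc.2 hab)
  convert this using 2
  simp only [eulerStep, sub_self, zero_smul, sub_zero]
  abel

lemma norm_eulerStep_sub_eulerStep_le (hf : LipschitzOnWith K f S) (hg : ∀ x ∈ S, ‖g x - f x‖ ≤ η)
    (hh : 0 ≤ h) {x y : E} (hx : x ∈ S) (hy : y ∈ S) :
    ‖eulerStep g h x - eulerStep f h y‖ ≤ (1 + h * K) * ‖x - y‖ + h * η := by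
  have hsplit : eulerStep g h x - eulerStep f h y =
      (x - y) + h • ((g x - f x) + (f x - f y)) := by
    simp only [eulerStep, smul_sub, smul_add]
    abel
  calc ‖eulerStep g h x - eulerStep f h y‖
      ≤ ‖x - y‖ + h * (‖g x - f x‖ + ‖f x - f y‖) := by
        rw [hsplit]
        refine (norm_add_le _ _).trans (add_le_add_right ?_ _)
        rw [norm_smul, Real.norm_of_nonneg hh]
        exact mul_le_mul_of_nonneg_left (norm_add_le _ _) hh
    _ ≤ ‖x - y‖ + h * (η + K * ‖x - y‖) := by
        gcongr
        exacts [hg x hx, hf.norm_sub_le hx hy]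
    _ = (1 + h * K) * ‖x - y‖ + h * η := by ring

lemma norm_iterate_eulerStep_sub_le {n : ℕ} (hf : LipschitzOnWith K f S)
    (hvS : MapsTo v (Icc 0 (n * h)) S)
    (hv : ∀ s ∈ Icc 0 (n * h), HasDerivWithinAt v (f (v s)) (Icc 0 (n * h)) s)
    (hM : ∀ s ∈ Icc 0 (n * h), ‖f (v s)‖ ≤ M) (hg : ∀ x ∈ S, ‖g x - f x‖ ≤ η) (hh : 0 ≤ h)
    (hS : ∀ j < n, (eulerStep g h)^[j] (v 0) ∈ S) :
    ‖(eulerStep g h)^[n] (v 0) - v (n * h)‖ ≤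
      n * h * (η + K * M * h) * Real.exp (n * h * K) := by
  have h₀ : (0 : ℝ) ∈ Icc 0 (n * h) := left_mem_Icc.2 (by positivity)
  have hM₀ : 0 ≤ M := (norm_nonneg _).trans (hM 0 h₀)
  have hη : 0 ≤ η := (norm_nonneg _).trans (hg (v 0) (hvS h₀))
  have hstep (j : ℕ) (hj : j < n) :
      ‖(eulerStep g h)^[j + 1] (v 0) - v ((j + 1 : ℕ) * h)‖ ≤
        (1 + h * K) * ‖(eulerStep g h)^[j] (v 0) - v (j * h)‖ + h * (η + K * M * h) := by
    have hcast : ((j + 1 : ℕ) : ℝ) * h - j * h = h := by push_cast; ring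
    have hle : (j : ℝ) * h ≤ (j + 1 : ℕ) * h := by rw [← sub_nonneg, hcast]; exact hh
    have hsub : Icc ((j : ℝ) * h) ((j + 1 : ℕ) * h) ⊆ Icc 0 (n * h) :=
      Icc_subset_Icc (by positivity) (by gcongr; exact hj)
    have hlocal := norm_sub_eulerStep_le hf (hvS.mono_left hsub)
      (fun s hs ↦ (hv s (hsub hs)).mono hsub) (fun s hs ↦ hM s (hsub hs)) hle
    have hstable := norm_eulerStep_sub_eulerStep_le hf hg hh (hS j hj)
      (hvS (hsub (left_mem_Icc.2 hle)))
    rw [hcast, norm_sub_rev] at hlocal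
    rw [Function.iterate_succ_apply']
    linarith [norm_sub_le_norm_sub_add_norm_sub (eulerStep g h ((eulerStep g h)^[j] (v 0)))
      (eulerStep f h (v (j * h))) (v ((j + 1 : ℕ) * h))]
  have hgronwall := discrete_gronwall (n₀ := 0) (c := fun _ ↦ h * K)
    (b := fun _ ↦ h * (η + K * M * h))
    (u := fun j ↦ ‖(eulerStep g h)^[min j n] (v 0) - v ((min j n : ℕ) * h)‖) (norm_nonneg _)
    (fun j _ ↦ ?_) (fun _ _ ↦ by positivity) (fun _ _ ↦ by positivity) n.zero_le
  · simpa [mul_assoc] using hgronwall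
  · obtain hj | hj := lt_or_ge j n
    · simpa [min_eq_left hj.le, min_eq_left (Nat.succ_le_of_lt hj)] using hstep j hj
    · simp only [min_eq_right hj, min_eq_right (hj.trans j.le_succ)]
      have : 0 ≤ h * K * ‖(eulerStep g h)^[n] (v 0) - v (n * h)‖ + h * (η + K * M * h) := by
        positivity
      linarith

theorem tendsto_iterate_eulerStep {G : ℕ → E → E} {T : ℝ} (hT : 0 ≤ T) (hf : LipschitzOnWith K f S)
    (hG : TendstoUniformlyOn G f atTop S) (hvS : MapsTo v (Icc 0 T) S)
    (hv : ∀ s ∈ Icc 0 T, HasDerivWithinAt v (f (v s)) (Icc 0 T) s) {n : ℕ → ℕ}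
    (hn : Tendsto n atTop atTop)
    (hS : ∀ k, ∀ j < n k, (eulerStep (G k) (T / n k))^[j] (v 0) ∈ S) :
    Tendsto (fun k ↦ (eulerStep (G k) (T / n k))^[n k] (v 0)) atTop (𝓝 (v T)) := by
  have hcont : ContinuousOn (fun s ↦ f (v s)) (Icc 0 T) :=
    hf.continuousOn.comp (fun s hs ↦ (hv s hs).continuousWithinAt) hvS
  obtain ⟨M, hM⟩ := isCompact_Icc.exists_bound_of_continuousOn hcont
  have hmesh : Tendsto (fun k ↦ K * M * (T / n k)) atTop (𝓝 0) := by
    simpa using (tendsto_const_nhds (x := T).div_atTop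
      ((tendsto_natCast_atTop_atTop (R := ℝ)).comp hn)).const_mul (K * M)
  refine Metric.tendsto_nhds.2 fun ε hε ↦ ?_
  have hsmall : Tendsto (fun η ↦ T * (η + η) * Real.exp (T * K)) (𝓝[>] 0) (𝓝 0) :=
    (Continuous.tendsto' (by fun_prop) _ _ (by simp)).mono_left nhdsWithin_le_nhds
  obtain ⟨η, hηε, hη⟩ := ((hsmall.eventually_lt_const hε).and self_mem_nhdsWithin).exists
  filter_upwards [Metric.tendstoUniformlyOn_iff.1 hG η hη, hmesh.eventually_le_const hη,
    hn.eventually_gt_atTop 0] with k hk hkη hnk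
  have hnT : n k * (T / n k) = T := by field_simp
  have hbound := norm_iterate_eulerStep_sub_le (n := n k) (h := T / n k) (η := η) hf
    (by rwa [hnT]) (by rwa [hnT]) (by rwa [hnT])
    (fun x hx ↦ by rw [← dist_eq_norm']; exact (hk x hx).le) (by positivity) (hS k)
  rw [hnT] at hbound
  rw [dist_eq_norm]
  exact (hbound.trans (by gcongr)).trans_lt hηε

end Euler

section AdmissibleStep

namespace BranchingMechanism

variable {B : BranchingMechanism} {h : ℝ} {p : ℝ × ℝ}

lemma HasFiniteActivity.integrable_fst (hB : B.HasFiniteActivity) :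
    Integrable (fun z : ℝ × ℝ ↦ z.1) B.n1 := by
  have := hB.isFiniteMeasure₁
  refine ((integrable_const 1).add B.integrable_weight₁).mono' (by fun_prop) ?_
  filter_upwards [B.ae_mem_Mset, B.ae_snd_nonneg] with z hz hz₂
  rw [Real.norm_of_nonneg hz.1, Pi.add_apply, weight₁]
  rcases min_cases z.1 (z.1 ^ 2) with ⟨hmin, _⟩ | ⟨hmin, _⟩ <;> rw [hmin] <;> nlinarith [hz.1]

lemma integrable_jumpFactor {μ : Measure (ℝ × ℝ)} [IsFiniteMeasure μ] (hp : p ∈ halfStrip)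
    {T : ℝ × ℝ → ℝ × ℝ} (hT : Measurable T) (hμ : ∀ᵐ z ∂μ, T z ∈ Mset) :
    Integrable (fun z ↦ jumpFactor p (T z)) μ := by
  refine (integrable_const 1).mono' ((measurable_jumpFactor p).comp hT).aestronglyMeasurable ?_
  filter_upwards [hμ] with z ⟨hz₁, n, hn⟩
  have := jumpFactor_mem_Icc (mem_strip_fst hp) hz₁ (hn ▸ n.cast_nonneg)
  rw [Real.norm_of_nonneg this.1]
  exact this.2

/-- The step lengths `h` for which an Euler step for a mechanism of finite activity has nonnegative
coefficients. -/
structure IsAdmissibleStep (B : BranchingMechanism) (h : ℝ) : Prop where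
  nonneg : 0 ≤ h
  mul_drift_le_one : h * (B.a11 + ∫ z, z.1 ∂B.n1) ≤ 1
  mul_mass_le_one : h * B.n2.real univ ≤ 1

variable (B) in
lemma eventually_isAdmissibleStep {T : ℝ} (hT : 0 ≤ T) :
    ∀ᶠ n : ℕ in atTop, B.IsAdmissibleStep (T / n) := by
  have hlim (c : ℝ) : Tendsto (fun n : ℕ ↦ T / n * c) atTop (𝓝 0) := by
    simpa using (tendsto_const_div_atTop_nhds_zero_nat T).mul_const c
  filter_upwards [(hlim _).eventually_le_const one_pos, (hlim _).eventually_le_const one_pos]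
    with n h₁ h₂ using ⟨by positivity, h₁, h₂⟩

variable (B) in
lemma exists_isAdmissibleStep_truncate {T : ℝ} (hT : 0 ≤ T) :
    ∃ n : ℕ → ℕ, Tendsto n atTop atTop ∧ ∀ k, (B.truncate k).IsAdmissibleStep (T / n k) := by
  choose n hn using fun k ↦
    ((eventually_ge_atTop k).and ((B.truncate k).eventually_isAdmissibleStep hT)).exists
  exact ⟨n, tendsto_atTop_mono (fun k ↦ (hn k).1) tendsto_id, fun k ↦ (hn k).2⟩

namespace HasFiniteActivity

lemma integrable_jumpFactor₁ (hB : B.HasFiniteActivity) (hp : p ∈ halfStrip) :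
    Integrable (jumpFactor p) B.n1 :=
  have := hB.isFiniteMeasure₁
  integrable_jumpFactor hp measurable_id B.ae_mem_Mset

lemma integrable_jumpFactor₂ (hB : B.HasFiniteActivity) (hp : p ∈ halfStrip) :
    Integrable (fun z ↦ jumpFactor p (z.1, z.2 + 1)) B.n2 :=
  have := hB.isFiniteMeasure₂
  integrable_jumpFactor hp (by fun_prop) (B.ae_mem_Mm1set.mono fun _ ↦ shift_mem_Mset)

lemma eulerStep_field_fst (hB : B.HasFiniteActivity) (hp : p ∈ halfStrip) :
    (eulerStep B.field h p).1 =
      (1 - h * (B.a11 + ∫ z, z.1 ∂B.n1)) * p.1 + h * ∫ z, (1 - jumpFactor p z) ∂B.n1 := by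
  have := hB.isFiniteMeasure₁
  have hjump : ∫ z, jumpField₁ p z ∂B.n1 =
      ∫ z, (1 - jumpFactor p z) ∂B.n1 - p.1 * ∫ z, z.1 ∂B.n1 := by
    have hint : Integrable (fun z ↦ 1 - jumpFactor p z) B.n1 :=
      (integrable_const 1).sub (hB.integrable_jumpFactor₁ hp)
    rw [← integral_const_mul, ← integral_sub hint (hB.integrable_fst.const_mul _)]
    simp only [jumpField₁, sub_right_comm]
  simp only [eulerStep, field, hB.alpha_eq_zero, hjump, Prod.fst_add, Prod.smul_fst, smul_eq_mul]
  ring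

lemma eulerStep_field_snd (hB : B.HasFiniteActivity) (hp : p ∈ halfStrip) :
    (eulerStep B.field h p).2 =
      (1 - h * B.n2.real univ) * p.2 + h * ∫ z, jumpFactor p (z.1, z.2 + 1) ∂B.n2 := by
  have := hB.isFiniteMeasure₂
  have hjump : ∫ z, jumpField₂ p z ∂B.n2 =
      ∫ z, jumpFactor p (z.1, z.2 + 1) ∂B.n2 - B.n2.real univ * p.2 := by
    simp only [jumpField₂]
    rw [integral_sub (hB.integrable_jumpFactor₂ hp) (integrable_const _), integral_const,
      smul_eq_mul]
  simp only [eulerStep, field, hB.a21_eq_zero, hjump, Prod.snd_add, Prod.smul_snd, smul_eq_mul]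
  ring

lemma eulerStep_mem_halfStrip (hB : B.HasFiniteActivity) (hh : B.IsAdmissibleStep h)
    (hp : p ∈ halfStrip) :
    eulerStep B.field h p ∈ halfStrip := by
  have := hB.isFiniteMeasure₂
  have hdrift := sub_nonneg.2 hh.mul_drift_le_one
  have hmass := sub_nonneg.2 hh.mul_mass_le_one
  have h₁ : 0 ≤ ∫ z, (1 - jumpFactor p z) ∂B.n1 := by
    refine integral_nonneg_of_ae ?_
    filter_upwards [B.ae_mem_Mset, B.ae_snd_nonneg] with z hz hz₂ using
      sub_nonneg.2 (jumpFactor_mem_Icc (mem_strip_fst hp) hz.1 hz₂).2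
  have hIcc : ∀ᵐ z ∂B.n2, jumpFactor p (z.1, z.2 + 1) ∈ Icc 0 1 := by
    filter_upwards [B.ae_mem_Mm1set] with z hz
    obtain ⟨hz₁, n, hn⟩ := shift_mem_Mset hz
    exact jumpFactor_mem_Icc (mem_strip_fst hp) hz₁ (hn ▸ n.cast_nonneg)
  have h₂ : 0 ≤ ∫ z, jumpFactor p (z.1, z.2 + 1) ∂B.n2 :=
    integral_nonneg_of_ae (hIcc.mono fun _ hz ↦ hz.1)
  have h₃ : ∫ z, jumpFactor p (z.1, z.2 + 1) ∂B.n2 ≤ B.n2.real univ := by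
    simpa using integral_mono_ae (hB.integrable_jumpFactor₂ hp) (integrable_const 1)
      (hIcc.mono fun _ hz ↦ hz.2)
  refine ⟨?_, ?_, ?_⟩
  · rw [mem_Ici, hB.eulerStep_field_fst hp]
    exact add_nonneg (mul_nonneg hdrift hp.1) (mul_nonneg hh.nonneg h₁)
  · rw [hB.eulerStep_field_snd hp]
    exact add_nonneg (mul_nonneg hmass hp.2.1) (mul_nonneg hh.nonneg h₂)
  · rw [hB.eulerStep_field_snd hp]
    linarith [mul_le_mul_of_nonneg_left hp.2.2 hmass, mul_le_mul_of_nonneg_left h₃ hh.nonneg]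

lemma iterate_eulerStep_mem_halfStrip (hB : B.HasFiniteActivity) (hh : B.IsAdmissibleStep h)
    (hp : p ∈ halfStrip) (j : ℕ) :
    (eulerStep B.field h)^[j] p ∈ halfStrip :=
  MapsTo.iterate (fun _ ↦ hB.eulerStep_mem_halfStrip hh) j hp

lemma iterate_eulerStep_fst_le (hB : B.HasFiniteActivity) (hh : B.IsAdmissibleStep h)
    (hp : p ∈ halfStrip) (j : ℕ) :
    ((eulerStep B.field h)^[j] p).1 ≤
      (p.1 + j * h * ∫ z, z.2 ∂B.n1) * Real.exp (j * h * |B.a11|) := by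
  have hh₀ := hh.nonneg
  have hz : 0 ≤ ∫ z, z.2 ∂B.n1 := integral_nonneg_of_ae B.ae_snd_nonneg
  have hstep (j : ℕ) : ((eulerStep B.field h)^[j + 1] p).1 ≤
      (1 + h * |B.a11|) * ((eulerStep B.field h)^[j] p).1 + h * ∫ z, z.2 ∂B.n1 := by
    have := mul_le_mul_of_nonneg_left
      (field_fst_le B (mem_strip_fst (hB.iterate_eulerStep_mem_halfStrip hh hp j))) hh₀
    rw [Function.iterate_succ_apply', eulerStep, Prod.fst_add, Prod.smul_fst, smul_eq_mul]
    linarith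
  have := discrete_gronwall (n₀ := 0) (c := fun _ ↦ h * |B.a11|) (b := fun _ ↦ h * ∫ z, z.2 ∂B.n1)
    (u := fun j ↦ ((eulerStep B.field h)^[j] p).1) hp.1 (fun j _ ↦ hstep j)
    (fun _ _ ↦ by positivity) (fun _ _ ↦ by positivity) j.zero_le
  simpa [mul_assoc] using this

end HasFiniteActivity

lemma iterate_eulerStep_truncate_mem_strip {k j n : ℕ} {T : ℝ} (hT : 0 ≤ T)
    (hadm : (B.truncate k).IsAdmissibleStep (T / n)) (hp : p ∈ halfStrip) (hj : j ≤ n) :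
    (eulerStep (B.truncate k).field (T / n))^[j] p ∈
      strip ((p.1 + T * ∫ z, z.2 ∂B.n1) * Real.exp (T * |B.a11|)) := by
  have hB := B.hasFiniteActivity_truncate k
  have hmem := hB.iterate_eulerStep_mem_halfStrip hadm hp j
  have hz : 0 ≤ ∫ z, z.2 ∂(B.truncate k).n1 := integral_nonneg_of_ae (B.truncate k).ae_snd_nonneg
  have hjT : j * (T / n) ≤ T := by
    rw [mul_div_assoc', mul_comm]
    exact div_le_of_le_mul₀ (by positivity) hT (by gcongr)
  refine ⟨⟨hmem.1, ?_⟩, hmem.2⟩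
  calc ((eulerStep (B.truncate k).field (T / n))^[j] p).1
      ≤ (p.1 + j * (T / n) * ∫ z, z.2 ∂(B.truncate k).n1) * Real.exp (j * (T / n) * |B.a11|) :=
        hB.iterate_eulerStep_fst_le hadm hp j
    _ ≤ (p.1 + T * ∫ z, z.2 ∂(B.truncate k).n1) * Real.exp (T * |B.a11|) := by
        have : 0 ≤ p.1 + T * ∫ z, z.2 ∂(B.truncate k).n1 := add_nonneg hp.1 (by positivity)
        gcongr
    _ ≤ _ := by
        have := B.integral_snd_truncate_le k
        gcongr

theorem tendsto_iterate_eulerStep_truncate {l : ℝ × ℝ} {V : ℝ → ℝ × ℝ} (hl : 0 ≤ l)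
    (hV : SolvesCumulant B l V) {T : ℝ} (hT : 0 ≤ T) {n : ℕ → ℕ} (hn : Tendsto n atTop atTop)
    (hadm : ∀ k, (B.truncate k).IsAdmissibleStep (T / n k)) :
    Tendsto (fun k ↦ (eulerStep (B.truncate k).field (T / n k))^[n k] (toStrip l)) atTop
      (𝓝 (toStrip (V T))) := by
  have hsub : Icc 0 T ⊆ Ici 0 := Icc_subset_Ici_self
  obtain ⟨C, hC⟩ := isCompact_Icc.exists_bound_of_continuousOn (hV.1.mono hsub)
  set R := (l.1 + T * ∫ z, z.2 ∂B.n1) * Real.exp (T * |B.a11|)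
  obtain ⟨K, hK⟩ := B.exists_lipschitzOnWith_field (max C R)
  have hVR : MapsTo (fun s ↦ toStrip (V s)) (Icc 0 T) (strip (max C R)) := fun s hs ↦
    toStrip_mem_strip (hV.nonneg hs.1) <| (le_abs_self _).trans <|
      (norm_fst_le (V s)).trans <| (hC s hs).trans <| le_max_left _ _
  have hiter (k j : ℕ) (hj : j < n k) :
      (eulerStep (B.truncate k).field (T / n k))^[j] (toStrip l) ∈ strip (max C R) :=
    prod_mono (Icc_subset_Icc_right (le_max_right _ _)) subset_rfl <|
      iterate_eulerStep_truncate_mem_strip hT (hadm k)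
        ⟨hl.1, (toStrip_mem_strip hl le_rfl).2⟩ hj.le
  simpa only [hV.apply_zero] using tendsto_iterate_eulerStep hT hK
    (B.tendstoUniformlyOn_field_truncate _) hVR
    (fun s hs ↦ (hV.hasDerivWithinAt_toStrip hs.1).mono hsub) hn (by rwa [hV.apply_zero])

end BranchingMechanism

end AdmissibleStep

section Positivity

variable {ι X : Type*} [TopologicalSpace X] [Monoid X] {φ : ι → X →ₜ* ℝ} {x : ι → ℝ × ℝ}

/-- The positivity of a family of points `x i = (v₁, e^{-v₂})` that admissible Euler steps preserve:
the functions `e^{-c v₁}`, for `c ≥ 0`, and `e^{-v₂}` of `i` are moment positive. -/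
structure IsMomentPositiveFamily (φ : ι → X →ₜ* ℝ) (x : ι → ℝ × ℝ) : Prop where
  mem_halfStrip (i : ι) : x i ∈ halfStrip
  exp_fst {c : ℝ} (hc : 0 ≤ c) : IsMomentPositive φ fun i ↦ Real.exp (-(c * (x i).1))
  snd : IsMomentPositive φ fun i ↦ (x i).2

lemma isMomentPositiveFamily_toStrip :
    IsMomentPositiveFamily monomial fun l : Quadrant ↦ toStrip l.1 where
  mem_halfStrip l := ⟨l.2.1, (toStrip_mem_strip l.2 le_rfl).2⟩
  exp_fst {c} hc := by
    have := IsMomentPositive.eval (φ := monomial)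
      (⟨Real.exp (-c), Real.exp_nonneg _, Real.exp_le_one_iff.2 (neg_nonpos.2 hc)⟩, 1)
    simpa [monomial_apply, ← Real.exp_mul, toStrip] using this
  snd := by
    have := IsMomentPositive.eval (φ := monomial)
      (1, ⟨Real.exp (-1), Real.exp_nonneg _, Real.exp_le_one_iff.2 (by norm_num)⟩)
    simpa [monomial_apply, ← Real.exp_mul, toStrip] using this

namespace IsMomentPositiveFamily

lemma of_tendsto {y : ℕ → ι → ℝ × ℝ} (hy : ∀ k, IsMomentPositiveFamily φ (y k))
    (hlim : ∀ i, Tendsto (fun k ↦ y k i) atTop (𝓝 (x i))) : IsMomentPositiveFamily φ x where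
  mem_halfStrip i := (isClosed_Ici.prod isClosed_Icc).mem_of_tendsto (hlim i)
    (.of_forall fun k ↦ (hy k).mem_halfStrip i)
  exp_fst hc := .of_tendsto (.of_forall fun k ↦ (hy k).exp_fst hc) fun i ↦
    ((hlim i).fst_nhds.const_mul _).neg.rexp
  snd := .of_tendsto (.of_forall fun k ↦ (hy k).snd) fun i ↦ (hlim i).snd_nhds

variable [CompactSpace X] [T2Space X] [MeasurableSpace X] [BorelSpace X] {B : BranchingMechanism}
  {h : ℝ} {i₀ : ι}

lemma jumpFactor (hx : IsMomentPositiveFamily φ x) (hi₀ : ∀ u, φ i₀ u = 1) {z : ℝ × ℝ}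
    (hz : z ∈ Mset) : IsMomentPositive φ fun i ↦ jumpFactor (x i) z := by
  obtain ⟨hz₁, n, hn⟩ := hz
  simpa only [_root_.jumpFactor, hn, Real.rpow_natCast, mul_comm z.1] using
    (hx.exp_fst hz₁).mul (hx.snd.pow hi₀ n) hi₀

lemma exp_eulerStep_fst (hx : IsMomentPositiveFamily φ x) (hi₀ : ∀ u, φ i₀ u = 1)
    (hB : B.HasFiniteActivity) (hh : B.IsAdmissibleStep h) {c : ℝ} (hc : 0 ≤ c) :
    IsMomentPositive φ fun i ↦ Real.exp (-(c * (eulerStep B.field h (x i)).1)) := by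
  have := hB.isFiniteMeasure₁
  have hh₀ := hh.nonneg
  have hdrift := sub_nonneg.2 hh.mul_drift_le_one
  have hjump : IsMomentPositive φ fun i ↦ ∫ z, _root_.jumpFactor (x i) z ∂B.n1 :=
    .integral (B.ae_mem_Mset.mono fun z ↦ hx.jumpFactor hi₀)
      fun i ↦ hB.integrable_jumpFactor₁ (hx.mem_halfStrip i)
  convert ((hx.exp_fst (mul_nonneg hc hdrift)).mul
    ((hjump.const_mul (mul_nonneg hc hh₀)).exp hi₀) hi₀).const_mul
    (Real.exp_nonneg (-(c * h * B.n1.real univ))) using 2 with i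
  rw [hB.eulerStep_field_fst (hx.mem_halfStrip i), integral_sub (integrable_const 1)
    (hB.integrable_jumpFactor₁ (hx.mem_halfStrip i)), integral_const, smul_eq_mul, mul_one,
    ← Real.exp_add, ← Real.exp_add]
  ring_nf

lemma eulerStep (hx : IsMomentPositiveFamily φ x) (hi₀ : ∀ u, φ i₀ u = 1)
    (hB : B.HasFiniteActivity) (hh : B.IsAdmissibleStep h) :
    IsMomentPositiveFamily φ fun i ↦ eulerStep B.field h (x i) where
  mem_halfStrip i := hB.eulerStep_mem_halfStrip hh (hx.mem_halfStrip i)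
  exp_fst hc := hx.exp_eulerStep_fst hi₀ hB hh hc
  snd := by
    simp only [hB.eulerStep_field_snd (hx.mem_halfStrip _)]
    exact (hx.snd.const_mul (sub_nonneg.2 hh.mul_mass_le_one)).add <| .const_mul (.integral
      (B.ae_mem_Mm1set.mono fun z hz ↦ hx.jumpFactor hi₀ (shift_mem_Mset hz))
      fun i ↦ hB.integrable_jumpFactor₂ (hx.mem_halfStrip i)) hh.nonneg

lemma iterate_eulerStep (hx : IsMomentPositiveFamily φ x) (hi₀ : ∀ u, φ i₀ u = 1)
    (hB : B.HasFiniteActivity) (hh : B.IsAdmissibleStep h) (n : ℕ) :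
    IsMomentPositiveFamily φ fun i ↦ (_root_.eulerStep B.field h)^[n] (x i) := by
  induction n with
  | zero => exact hx
  | succ n ih => simpa only [Function.iterate_succ_apply'] using ih.eulerStep hi₀ hB hh

end IsMomentPositiveFamily

theorem isMomentPositiveFamily_toStrip_cumulant {B : BranchingMechanism}
    {V : ℝ → ℝ × ℝ → ℝ × ℝ} (hV : ∀ l, 0 ≤ l → SolvesCumulant B l (V · l)) {t : ℝ} (ht : 0 ≤ t) :
    IsMomentPositiveFamily monomial fun l : Quadrant ↦ toStrip (V t l) := by
  obtain ⟨n, hn, hadm⟩ := B.exists_isAdmissibleStep_truncate ht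
  exact .of_tendsto (fun k ↦ isMomentPositiveFamily_toStrip.iterate_eulerStep
      monomial_zero_apply (B.hasFiniteActivity_truncate k) (hadm k) (n k))
    fun l ↦ B.tendsto_iterate_eulerStep_truncate l.2 (hV l l.2) ht hn hadm

lemma isMomentPositive_exp_neg_cumulant {B : BranchingMechanism}
    {V : ℝ → ℝ × ℝ → ℝ × ℝ} (hV : ∀ l, 0 ≤ l → SolvesCumulant B l (V · l)) {t : ℝ} (ht : 0 ≤ t)
    {a : ℝ × ℝ} (ha : a ∈ Mset) :
    IsMomentPositive monomial fun l ↦ Real.exp (-(a.1 * (V t l).1 + a.2 * (V t l).2)) := by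
  simpa only [jumpFactor_toStrip, mul_comm a.1, mul_comm a.2] using
    (isMomentPositiveFamily_toStrip_cumulant hV ht).jumpFactor monomial_zero_apply ha

end Positivity

section Linearization

open Asymptotics

variable {E : Type*} [NormedAddCommGroup E] [NormedSpace ℝ E] {Φ : E → E} {A : E →L[ℝ] E}
  {S : Set E} {π : ℝ → E} {R t : ℝ}

lemma dist_inv_smul_le_gronwallBound {W : ℝ → E} {ε η : ℝ} (hε : 0 < ε)
    (hΦ : ∀ s ∈ Icc 0 t, ‖Φ (W s) - A (W s)‖ ≤ ε * η)
    (hW : ∀ s ∈ Ici 0, HasDerivWithinAt W (Φ (W s)) (Ici 0) s)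
    (hπ : ∀ s ∈ Ici 0, HasDerivWithinAt π (A (π s)) (Ici 0) s) (h₀ : W 0 = ε • π 0) (ht : 0 ≤ t) :
    dist (ε⁻¹ • W t) (π t) ≤ gronwallBound 0 ‖A‖₊ η t := by
  have hsub : Icc 0 t ⊆ Ici 0 := Icc_subset_Ici_self
  have hW' (s : ℝ) (hs : s ∈ Ici 0) :
      HasDerivWithinAt (fun s ↦ ε⁻¹ • W s) (ε⁻¹ • Φ (W s)) (Ici 0) s := (hW s hs).const_smul _
  have hlin (s : ℝ) (hs : s ∈ Ico 0 t) : dist (ε⁻¹ • Φ (W s)) (A (ε⁻¹ • W s)) ≤ η := by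
    rw [map_smul, dist_eq_norm, ← smul_sub, norm_smul, Real.norm_of_nonneg (inv_nonneg.2 hε.le),
      inv_mul_le_iff₀ hε]
    exact hΦ s (Ico_subset_Icc_self hs)
  have := dist_le_of_approx_trajectories_ODE (v := fun _ ↦ A) (fun _ ↦ A.lipschitz)
    (fun s hs ↦ ((hW' s (hsub hs)).continuousWithinAt).mono hsub)
    (fun s hs ↦ (hW' s hs.1).mono (Ici_subset_Ici.2 hs.1)) hlin
    (fun s hs ↦ ((hπ s (hsub hs)).continuousWithinAt).mono hsub)
    (fun s hs ↦ (hπ s hs.1).mono (Ici_subset_Ici.2 hs.1))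
    (fun s _ ↦ (dist_self _).le) (δ := 0) (by simp [h₀, hε.ne']) t ⟨ht, le_rfl⟩
  simpa using this

theorem tendsto_inv_smul_of_isLittleO (hΦ : (fun v ↦ Φ v - A v) =o[𝓝[S] 0] id) {W : ℝ → ℝ → E}
    (hWS : ∀ ε > 0, ∀ s ∈ Icc 0 t, W ε s ∈ S) (hR : ∀ ε > 0, ∀ s ∈ Icc 0 t, ‖W ε s‖ ≤ ε * R)
    (hW : ∀ ε > 0, ∀ s ∈ Ici 0, HasDerivWithinAt (W ε) (Φ (W ε s)) (Ici 0) s)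
    (hπ : ∀ s ∈ Ici 0, HasDerivWithinAt π (A (π s)) (Ici 0) s)
    (h₀ : ∀ ε > 0, W ε 0 = ε • π 0) (ht : 0 ≤ t) :
    Tendsto (fun ε ↦ ε⁻¹ • W ε t) (𝓝[>] 0) (𝓝 (π t)) := by
  refine Metric.tendsto_nhds.2 fun r hr ↦ ?_
  have hsmall : Tendsto (fun η ↦ gronwallBound 0 ‖A‖₊ (η * R) t) (𝓝[>] 0) (𝓝 0) :=
    (((gronwallBound_continuous_ε 0 _ t).comp (continuous_mul_const R)).tendsto' 0 0
      (by simp [gronwallBound_ε0_δ0])).mono_left nhdsWithin_le_nhds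
  obtain ⟨η, hηr, hη⟩ := ((hsmall.eventually_lt_const hr).and self_mem_nhdsWithin).exists
  obtain ⟨δ, hδ, hball⟩ := Metric.nhdsWithin_basis_ball.eventually_iff.1 (hΦ.def hη)
  have hmul : ∀ᶠ ε in 𝓝[>] (0 : ℝ), ε * R < δ :=
    ((continuous_mul_const R).tendsto' 0 0 (zero_mul R)).mono_left nhdsWithin_le_nhds
      |>.eventually_lt_const hδ
  filter_upwards [hmul, self_mem_nhdsWithin] with ε hεδ hε
  refine (dist_inv_smul_le_gronwallBound (hε : 0 < ε) (fun s hs ↦ ?_) (hW ε hε) hπ (h₀ ε hε)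
    ht).trans_lt hηr
  have hbound := hR ε hε s hs
  have hη₀ : 0 < η := hη
  calc ‖Φ (W ε s) - A (W ε s)‖ ≤ η * ‖W ε s‖ :=
        hball ⟨mem_ball_zero_iff.2 (hbound.trans_lt hεδ), hWS ε hε s hs⟩
    _ ≤ η * (ε * R) := by gcongr
    _ = ε * (η * R) := by ring

end Linearization

section MomentSystem

open Asymptotics

/-- The second order Taylor remainder of `e^{-x}` at `0`. -/
def expRemainder (x : ℝ) : ℝ := Real.exp (-x) - 1 + x

lemma expRemainder_nonneg (x : ℝ) : 0 ≤ expRemainder x := by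
  unfold expRemainder; linarith [Real.add_one_le_exp (-x)]

@[fun_prop]
lemma continuous_expRemainder : Continuous expRemainder := by
  unfold expRemainder; fun_prop

lemma expRemainder_le_mul (x : ℝ) : expRemainder x ≤ x * (1 - Real.exp (-x)) := by
  have hprod : Real.exp (-x) * (x + 1) ≤ Real.exp (-x) * Real.exp x := by
    gcongr
    exact Real.add_one_le_exp x
  rw [← Real.exp_add, neg_add_cancel, Real.exp_zero] at hprod
  unfold expRemainder
  linarith

lemma abs_one_sub_exp_neg_le {r x : ℝ} (hr : 0 ≤ r) (hx : -r ≤ x) :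
    |1 - Real.exp (-x)| ≤ Real.exp r * min 1 |x| := by
  have hpos := Real.exp_pos (-x)
  have hexp : 1 ≤ Real.exp r := Real.one_le_exp hr
  have hexp' : Real.exp (-x) ≤ Real.exp r := Real.exp_le_exp.2 (by linarith)
  have hadd := Real.add_one_le_exp (-x)
  have hmul := expRemainder_le_mul x
  unfold expRemainder at hmul
  rw [mul_min_of_nonneg _ _ (by positivity)]
  rcases le_total 0 x with h | h
  · rw [abs_of_nonneg h, abs_of_nonneg (sub_nonneg.2 (Real.exp_le_one_iff.2 (by linarith)))]
    exact le_min (by linarith) (by nlinarith)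
  · rw [abs_of_nonpos h, abs_of_nonpos (by linarith)]
    exact le_min (by linarith) (by nlinarith)

lemma expRemainder_le_of_neg_le {r x : ℝ} (hr : 0 ≤ r) (hx : -r ≤ x) :
    expRemainder x ≤ Real.exp r * min |x| (x ^ 2) := by
  calc expRemainder x ≤ |x * (1 - Real.exp (-x))| :=
        (expRemainder_le_mul x).trans (le_abs_self _)
    _ ≤ |x| * (Real.exp r * min 1 |x|) := by
        rw [abs_mul]
        gcongr
        exact abs_one_sub_exp_neg_le hr hx
    _ = Real.exp r * min |x| (x ^ 2) := by
        rw [mul_left_comm, mul_min_of_nonneg _ _ (abs_nonneg x), mul_one, abs_mul_abs_self, sq]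

lemma expRemainder_inner_le {v z : ℝ × ℝ} (hv : 0 ≤ v) (hz : z ∈ Mm1set) :
    expRemainder (v.1 * z.1 + v.2 * z.2) ≤
      Real.exp ‖v‖ * min (‖v‖ * weight₂ z) ((‖v‖ * weight₂ z) ^ 2) := by
  have hw := weight₂_nonneg hz
  obtain ⟨hz₁, n, hn, hz₂⟩ := hz
  have hz₂' : -1 ≤ z.2 := by rw [hz₂]; exact_mod_cast hn
  have hv₂ : v.2 ≤ ‖v‖ := (le_abs_self _).trans (norm_snd_le v)
  have habs : |v.1 * z.1 + v.2 * z.2| ≤ ‖v‖ * weight₂ z := by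
    refine (abs_add_le _ _).trans ?_
    rw [abs_mul, abs_mul, abs_of_nonneg hz₁, weight₂, mul_add]
    gcongr
    exacts [norm_fst_le v, norm_snd_le v]
  have hlower : -‖v‖ ≤ v.1 * z.1 + v.2 * z.2 := by
    nlinarith [mul_nonneg hv.1 hz₁, mul_le_mul_of_nonneg_left hz₂' hv.2]
  refine (expRemainder_le_of_neg_le (norm_nonneg v) hlower).trans ?_
  rw [← sq_abs (v.1 * z.1 + v.2 * z.2)]
  gcongr

variable {μ : Measure (ℝ × ℝ)} {v : ℝ × ℝ}

lemma integrable_expRemainder_inner (hμ : ∀ᵐ z ∂μ, z ∈ Mm1set)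
    (hint : Integrable (fun z ↦ min (weight₂ z) (weight₂ z ^ 2)) μ) (hv : 0 ≤ v) :
    Integrable (fun z ↦ expRemainder (v.1 * z.1 + v.2 * z.2)) μ := by
  refine (hint.const_mul (Real.exp ‖v‖ * (‖v‖ + ‖v‖ ^ 2))).mono' (by fun_prop) ?_
  filter_upwards [hμ] with z hz
  have hw := weight₂_nonneg hz
  rw [Real.norm_of_nonneg (expRemainder_nonneg _), mul_assoc, mul_min_of_nonneg _ _ (by positivity)]
  refine (expRemainder_inner_le hv hz).trans ?_
  gcongr
  · exact le_add_of_nonneg_right (by positivity)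
  · rw [mul_pow]
    gcongr
    exact le_add_of_nonneg_left (by positivity)

lemma expRemainder_inner_div_norm_le (hv : 0 ≤ v) (hv₁ : ‖v‖ ≤ 1) {z : ℝ × ℝ} (hz : z ∈ Mm1set) :
    expRemainder (v.1 * z.1 + v.2 * z.2) / ‖v‖ ≤
      Real.exp 1 * min (weight₂ z) (‖v‖ * weight₂ z ^ 2) := by
  have hw := weight₂_nonneg hz
  refine div_le_of_le_mul₀ (norm_nonneg v) (by positivity) ?_
  refine (expRemainder_inner_le hv hz).trans ?_
  rw [mul_assoc, min_mul_of_nonneg _ _ (norm_nonneg v), mul_comm (weight₂ z),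
    (by ring : ‖v‖ * weight₂ z ^ 2 * ‖v‖ = (‖v‖ * weight₂ z) ^ 2)]
  gcongr

lemma isLittleO_integral_expRemainder_inner (hμ : ∀ᵐ z ∂μ, z ∈ Mm1set)
    (hint : Integrable (fun z ↦ min (weight₂ z) (weight₂ z ^ 2)) μ) :
    (fun v : ℝ × ℝ ↦ ∫ z, expRemainder (v.1 * z.1 + v.2 * z.2) ∂μ) =o[𝓝[≥] 0] id := by
  have hnorm : Tendsto (fun v : ℝ × ℝ ↦ ‖v‖) (𝓝[≥] 0) (𝓝 0) :=
    (continuous_norm.tendsto' 0 0 norm_zero).mono_left nhdsWithin_le_nhds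
  have hlim : Tendsto (fun v : ℝ × ℝ ↦ ∫ z, expRemainder (v.1 * z.1 + v.2 * z.2) / ‖v‖ ∂μ)
      (𝓝[≥] 0) (𝓝 (∫ _, (0 : ℝ) ∂μ)) := by
    refine tendsto_integral_filter_of_dominated_convergence _ (.of_forall fun v ↦ by fun_prop) ?_
      (hint.const_mul (Real.exp 1)) ?_
    · filter_upwards [self_mem_nhdsWithin, hnorm.eventually_le_const one_pos] with v hv hv₁
      filter_upwards [hμ] with z hz
      rw [Real.norm_of_nonneg (div_nonneg (expRemainder_nonneg _) (norm_nonneg v))]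
      refine (expRemainder_inner_div_norm_le hv hv₁ hz).trans ?_
      gcongr
      exact mul_le_of_le_one_left (sq_nonneg _) hv₁
    · filter_upwards [hμ] with z hz
      have hzero : Tendsto (fun v : ℝ × ℝ ↦ Real.exp 1 * (‖v‖ * weight₂ z ^ 2)) (𝓝[≥] 0) (𝓝 0) := by
        simpa using (hnorm.mul_const (weight₂ z ^ 2)).const_mul (Real.exp 1)
      refine squeeze_zero' (.of_forall fun v ↦ div_nonneg (expRemainder_nonneg _) (norm_nonneg v))
        ?_ hzero
      filter_upwards [self_mem_nhdsWithin, hnorm.eventually_le_const one_pos] with v hv hv₁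
      exact (expRemainder_inner_div_norm_le hv hv₁ hz).trans (by gcongr; exact min_le_right _ _)
  rw [← isLittleO_norm_right, isLittleO_iff_tendsto']
  · simpa [integral_div] using hlim
  · refine .of_forall fun v hv ↦ ?_
    rw [id, norm_eq_zero] at hv
    simp [hv, expRemainder]

namespace BranchingMechanism

variable (B : BranchingMechanism)

lemma ae_mem_Mm1set₁ : ∀ᵐ z ∂B.n1, z ∈ Mm1set :=
  B.ae_mem_Mset.mono fun _ ⟨hz₁, n, hn⟩ ↦ ⟨hz₁, n, by omega, by simpa using hn⟩

lemma integrable_min_weight₂_sq₁ :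
    Integrable (fun z ↦ min (weight₂ z) (weight₂ z ^ 2)) B.n1 := by
  refine (B.integrable_weight₁.const_mul 2).mono' (by unfold weight₂; fun_prop) ?_
  filter_upwards [B.ae_mem_Mset] with z hz
  obtain ⟨hz₁, n, hn⟩ := hz
  have hmin : 0 ≤ min z.1 (z.1 ^ 2) := le_min hz₁ (sq_nonneg _)
  have hw : weight₂ z = z.1 + n := by rw [weight₂, hn, Nat.abs_cast]
  rw [Real.norm_of_nonneg (by rw [hw]; positivity), weight₁, hw, hn]
  rcases n.eq_zero_or_pos with rfl | hpos
  · simp only [Nat.cast_zero, add_zero]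
    linarith
  · have hn₁ : (1 : ℝ) ≤ n := by exact_mod_cast hpos
    refine (min_le_left _ _).trans ?_
    rcases le_total z.1 1 with h | h
    · linarith
    · linarith [le_min le_rfl (le_self_pow₀ h two_ne_zero)]

lemma integrable_min_weight₂_sq₂ :
    Integrable (fun z ↦ min (weight₂ z) (weight₂ z ^ 2)) B.n2 := by
  refine B.integrable_weight₂.mono' (by unfold weight₂; fun_prop) ?_
  filter_upwards [B.ae_mem_Mm1set] with z hz
  rw [Real.norm_of_nonneg (le_min (weight₂_nonneg hz) (sq_nonneg _))]
  exact min_le_left _ _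

lemma integrable_fst₂ : Integrable (fun z : ℝ × ℝ ↦ z.1) B.n2 := by
  refine B.integrable_weight₂.mono' (by fun_prop) ?_
  filter_upwards [B.ae_mem_Mm1set] with z hz
  rw [Real.norm_of_nonneg hz.1]
  exact le_add_of_nonneg_right (abs_nonneg _)

lemma integrable_snd₂ : Integrable (fun z : ℝ × ℝ ↦ z.2) B.n2 := by
  refine B.integrable_weight₂.mono' (by fun_prop) ?_
  filter_upwards [B.ae_mem_Mm1set] with z hz
  exact le_add_of_nonneg_left hz.1

/-- The coefficient matrix of the moment linear system; it is the derivative of `(Φ₁, Φ₂)` at `0`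
along the quadrant. -/
def momentMatrix : ℝ × ℝ →L[ℝ] ℝ × ℝ :=
  ((-B.a11) • ContinuousLinearMap.fst ℝ ℝ ℝ +
    (∫ z, z.2 ∂B.n1) • ContinuousLinearMap.snd ℝ ℝ ℝ).prod
  ((B.a21 + ∫ z, z.1 ∂B.n2) • ContinuousLinearMap.fst ℝ ℝ ℝ +
    (∫ z, z.2 ∂B.n2) • ContinuousLinearMap.snd ℝ ℝ ℝ)

lemma momentMatrix_apply_fst (v : ℝ × ℝ) :
    (B.momentMatrix v).1 = -B.a11 * v.1 + v.2 * ∫ z, z.2 ∂B.n1 := by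
  simp [momentMatrix, mul_comm v.2]

lemma momentMatrix_apply_snd (v : ℝ × ℝ) :
    (B.momentMatrix v).2 = B.a21 * v.1 + ∫ z, (z.1 * v.1 + z.2 * v.2) ∂B.n2 := by
  rw [integral_add (B.integrable_fst₂.mul_const _) (B.integrable_snd₂.mul_const _),
    integral_mul_const, integral_mul_const]
  simp [momentMatrix, add_mul, add_assoc]

variable {B}

lemma mPhi1_eq_sub (hv : 0 ≤ v) : mPhi1 B v = (B.momentMatrix v).1 -
    (B.alpha * v.1 ^ 2 + ∫ z, expRemainder (v.1 * z.1 + v.2 * z.2) ∂B.n1) := by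
  have hjump : ∫ z, (Real.exp (-(v.1 * z.1 + v.2 * z.2)) - 1 + v.1 * z.1) ∂B.n1 =
      (∫ z, expRemainder (v.1 * z.1 + v.2 * z.2) ∂B.n1) - v.2 * ∫ z, z.2 ∂B.n1 := by
    rw [← integral_const_mul, ← integral_sub (integrable_expRemainder_inner B.ae_mem_Mm1set₁
      B.integrable_min_weight₂_sq₁ hv) (B.integrable_snd.const_mul _)]
    congr with z
    rw [expRemainder]
    ring
  rw [mPhi1, hjump, momentMatrix_apply_fst]
  ring

lemma mPhi2_eq_sub (hv : 0 ≤ v) : mPhi2 B v = (B.momentMatrix v).2 -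
    ∫ z, expRemainder (v.1 * z.1 + v.2 * z.2) ∂B.n2 := by
  have hlin : Integrable (fun z : ℝ × ℝ ↦ z.1 * v.1 + z.2 * v.2) B.n2 :=
    (B.integrable_fst₂.mul_const _).add (B.integrable_snd₂.mul_const _)
  rw [mPhi2, momentMatrix_apply_snd, add_sub_assoc, ← integral_sub hlin
    (integrable_expRemainder_inner B.ae_mem_Mm1set B.integrable_min_weight₂_sq₂ hv)]
  congr with z
  rw [expRemainder]
  ring

lemma mPhi1_le (hv : 0 ≤ v) : mPhi1 B v ≤ (B.momentMatrix v).1 := by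
  rw [mPhi1_eq_sub hv]
  exact sub_le_self _ (add_nonneg (mul_nonneg B.alpha_nonneg (sq_nonneg _))
    (integral_nonneg fun _ ↦ expRemainder_nonneg _))

lemma mPhi2_le (hv : 0 ≤ v) : mPhi2 B v ≤ (B.momentMatrix v).2 := by
  rw [mPhi2_eq_sub hv]
  exact sub_le_self _ (integral_nonneg fun _ ↦ expRemainder_nonneg _)

variable (B) in
theorem isLittleO_mPhi_sub_momentMatrix :
    (fun v ↦ (mPhi1 B v, mPhi2 B v) - B.momentMatrix v) =o[𝓝[≥] 0] id := by
  have hsq : (fun v : ℝ × ℝ ↦ B.alpha * v.1 ^ 2) =o[𝓝[≥] 0] id := by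
    have hpow : (fun v : ℝ × ℝ ↦ ‖v‖ ^ 2) =o[𝓝[≥] 0] id :=
      (isLittleO_norm_pow_id one_lt_two).mono nhdsWithin_le_nhds
    refine (IsBigO.of_norm_le fun v ↦ ?_).const_mul_left _ |>.trans_isLittleO hpow
    rw [norm_pow]
    gcongr
    exact norm_fst_le v
  have h₁ := hsq.add (isLittleO_integral_expRemainder_inner B.ae_mem_Mm1set₁
    B.integrable_min_weight₂_sq₁)
  have h₂ := isLittleO_integral_expRemainder_inner B.ae_mem_Mm1set B.integrable_min_weight₂_sq₂
  refine (h₁.neg_left.prod_left h₂.neg_left).congr' ?_ .rfl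
  filter_upwards [self_mem_nhdsWithin] with v hv
  ext
  · simp [mPhi1_eq_sub hv]
  · simp [mPhi2_eq_sub hv]

end BranchingMechanism

namespace SolvesMoment

variable {B : BranchingMechanism} {l : ℝ × ℝ} {π : ℝ → ℝ × ℝ}

lemma hasDerivWithinAt (hπ : SolvesMoment B l π) {t : ℝ} (ht : 0 ≤ t) :
    HasDerivWithinAt π (B.momentMatrix (π t)) (Ici 0) t := by
  obtain ⟨h₁, h₂⟩ := hπ.2.2 t ht
  exact (h₁.prodMk h₂).congr_deriv
    (Prod.ext (B.momentMatrix_apply_fst _).symm (B.momentMatrix_apply_snd _).symm)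

end SolvesMoment

namespace SolvesCumulant

variable {B : BranchingMechanism} {l : ℝ × ℝ} {V : ℝ → ℝ × ℝ} {t : ℝ}

lemma fst_add_snd_le (hV : SolvesCumulant B l V) (ht : 0 ≤ t) :
    (V t).1 + (V t).2 ≤ (l.1 + l.2) * Real.exp (2 * ‖B.momentMatrix‖ * t) := by
  have hderiv (s : ℝ) (hs : 0 ≤ s) :
      HasDerivWithinAt (fun s ↦ (V s).1 + (V s).2) (mPhi1 B (V s) + mPhi2 B (V s)) (Ici 0) s := by
    have hfst : HasDerivWithinAt (fun s ↦ (V s).1) (mPhi1 B (V s)) (Ici 0) s :=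
      (hV.hasDerivWithinAt hs).fst
    have hsnd : HasDerivWithinAt (fun s ↦ (V s).2) (mPhi2 B (V s)) (Ici 0) s :=
      (hV.hasDerivWithinAt hs).snd
    exact hfst.fun_add hsnd
  have hbound (s : ℝ) (hs : 0 ≤ s) :
      mPhi1 B (V s) + mPhi2 B (V s) ≤ 2 * ‖B.momentMatrix‖ * ((V s).1 + (V s).2) + 0 := by
    have hv := hV.nonneg hs
    have hnorm : ‖V s‖ ≤ (V s).1 + (V s).2 := by
      rw [Prod.norm_def, Real.norm_of_nonneg hv.1, Real.norm_of_nonneg hv.2]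
      exact max_le_add_of_nonneg hv.1 hv.2
    have hA : ‖B.momentMatrix (V s)‖ ≤ ‖B.momentMatrix‖ * ((V s).1 + (V s).2) :=
      (B.momentMatrix.le_opNorm _).trans (by gcongr)
    have h₁ := (le_abs_self _).trans (norm_fst_le (B.momentMatrix (V s)))
    have h₂ := (le_abs_self _).trans (norm_snd_le (B.momentMatrix (V s)))
    linarith [BranchingMechanism.mPhi1_le (B := B) hv, BranchingMechanism.mPhi2_le (B := B) hv]
  have := le_gronwallBound_of_liminf_deriv_right_le (f := fun s ↦ (V s).1 + (V s).2)
    (a := 0) (b := t)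
    (fun s hs ↦ (hderiv s hs.1).continuousWithinAt.mono Icc_subset_Ici_self)
    (fun s hs _ ↦ ((hderiv s hs.1).mono (Ici_subset_Ici.2 hs.1)).liminf_right_slope_le)
    le_rfl (fun s hs ↦ hbound s hs.1) t ⟨ht, le_rfl⟩
  simpa [gronwallBound_ε0, hV.apply_zero] using this

lemma eq_zero (hV : SolvesCumulant B 0 V) (ht : 0 ≤ t) : V t = 0 := by
  have hle := hV.fst_add_snd_le ht
  have hv := hV.nonneg ht
  have h₁ : 0 ≤ (V t).1 := hv.1
  have h₂ : 0 ≤ (V t).2 := hv.2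
  simp only [Prod.fst_zero, Prod.snd_zero, add_zero, zero_mul] at hle
  exact Prod.ext (show (V t).1 = 0 by linarith) (show (V t).2 = 0 by linarith)

end SolvesCumulant

theorem SolvesMoment.tendsto_inv_smul_cumulant {B : BranchingMechanism} {V : ℝ → ℝ × ℝ → ℝ × ℝ}
    (hV : ∀ l, 0 ≤ l → SolvesCumulant B l (V · l)) {π : ℝ → ℝ × ℝ}
    (hπ : SolvesMoment B (1, 1) π) {t : ℝ} (ht : 0 ≤ t) :
    Tendsto (fun ε : ℝ ↦ ε⁻¹ • V t (ε, ε)) (𝓝[>] 0) (𝓝 (π t)) := by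
  have hVε (ε : ℝ) (hε : ε > 0) := hV (ε, ε) ⟨hε.le, hε.le⟩
  refine tendsto_inv_smul_of_isLittleO (W := fun ε s ↦ V s (ε, ε)) B.isLittleO_mPhi_sub_momentMatrix
    (R := 2 * Real.exp (2 * ‖B.momentMatrix‖ * t)) (fun ε hε s hs ↦ (hVε ε hε).nonneg hs.1)
    (fun ε hε s hs ↦ ?_) (fun ε hε s hs ↦ (hVε ε hε).hasDerivWithinAt hs)
    (fun s hs ↦ hπ.hasDerivWithinAt hs) (fun ε hε ↦ ?_) ht
  · have hv := (hVε ε hε).nonneg hs.1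
    calc ‖V s (ε, ε)‖ ≤ (V s (ε, ε)).1 + (V s (ε, ε)).2 := by
          rw [Prod.norm_def, Real.norm_of_nonneg hv.1, Real.norm_of_nonneg hv.2]
          exact max_le_add_of_nonneg hv.1 hv.2
      _ ≤ (ε + ε) * Real.exp (2 * ‖B.momentMatrix‖ * s) := (hVε ε hε).fst_add_snd_le hs.1
      _ ≤ (ε + ε) * Real.exp (2 * ‖B.momentMatrix‖ * t) := by gcongr; exact hs.2
      _ = _ := by ring
  · rw [(hVε ε hε).apply_zero, hπ.1]
    simp

end MomentSystem

section Wasserstein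

lemma inf_mem_Mset {x y : ℝ × ℝ} (hx : x ∈ Mset) (hy : y ∈ Mset) : x ⊓ y ∈ Mset := by
  obtain ⟨hx₁, m, hm⟩ := hx
  obtain ⟨hy₁, n, hn⟩ := hy
  exact ⟨le_min hx₁ hy₁, min m n, by rw [Prod.snd_inf, hm, hn, Nat.cast_min]⟩

lemma sub_mem_Mset {x y : ℝ × ℝ} (hx : x ∈ Mset) (hy : y ∈ Mset) (hyx : y ≤ x) :
    x - y ∈ Mset := by
  obtain ⟨-, m, hm⟩ := hx
  obtain ⟨-, n, hn⟩ := hy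
  have hnm : n ≤ m := by
    have := hyx.2
    rw [hm, hn] at this
    exact_mod_cast this
  exact ⟨sub_nonneg.2 hyx.1, m - n, by rw [Prod.snd_sub, hm, hn, Nat.cast_sub hnm]⟩

lemma sub_min_add_sub_min (r s : ℝ) : r - min r s + (s - min r s) = |r - s| := by
  rw [← max_sub_min_eq_abs']
  linarith [min_add_max r s]

lemma HasLaplaceExponent.tendsto_zero {μ : Measure (ℝ × ℝ)} {L : ℝ × ℝ → ℝ}
    (hμ : HasLaplaceExponent μ L) : Tendsto (fun ε : ℝ ↦ L (ε, ε)) (𝓝[>] 0) (𝓝 0) := by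
  have := hμ.isProbabilityMeasure
  have hint : Tendsto (fun ε : ℝ ↦ ∫ y, Real.exp (-(ε * y.1 + ε * y.2)) ∂μ) (𝓝[>] 0)
      (𝓝 (∫ _, 1 ∂μ)) := by
    refine tendsto_integral_filter_of_dominated_convergence (fun _ ↦ 1)
      (.of_forall fun ε ↦ by fun_prop) ?_ (integrable_const 1) (ae_of_all _ fun y ↦ ?_)
    · filter_upwards [self_mem_nhdsWithin] with ε hε
      filter_upwards [hμ.ae_nonneg] with y hy
      rw [Real.norm_of_nonneg (Real.exp_nonneg _)]
      exact exp_neg_inner_le_one (l := (ε, ε)) ⟨le_of_lt hε, le_of_lt hε⟩ hy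
    · have hcont : Continuous fun ε : ℝ ↦ Real.exp (-(ε * y.1 + ε * y.2)) := by fun_prop
      exact (hcont.tendsto' 0 1 (by simp)).mono_left nhdsWithin_le_nhds
  have hlog := (hint.log (by simp)).neg
  simp only [integral_const, probReal_univ, smul_eq_mul, mul_one, Real.log_one, neg_zero] at hlog
  refine hlog.congr' ?_
  filter_upwards [self_mem_nhdsWithin] with ε hε
  rw [hμ.integral_exp (ε, ε) ⟨le_of_lt hε, le_of_lt hε⟩, Real.log_exp, neg_neg]

section Cumulant

variable {B : BranchingMechanism} {V : ℝ → ℝ × ℝ → ℝ × ℝ} {π : ℝ → ℝ × ℝ} {t : ℝ} {a : ℝ × ℝ}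

lemma tendsto_inner_cumulant_div (hV : ∀ l, 0 ≤ l → SolvesCumulant B l (V · l))
    (hπ : SolvesMoment B (1, 1) π) (ht : 0 ≤ t) (a : ℝ × ℝ) :
    Tendsto (fun ε : ℝ ↦ (a.1 * (V t (ε, ε)).1 + a.2 * (V t (ε, ε)).2) / ε) (𝓝[>] 0)
      (𝓝 (a.1 * (π t).1 + a.2 * (π t).2)) := by
  have hlim := hπ.tendsto_inv_smul_cumulant hV ht
  refine ((hlim.fst_nhds.const_mul a.1).add (hlim.snd_nhds.const_mul a.2)).congr fun ε ↦ ?_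
  simp only [Prod.smul_fst, Prod.smul_snd, smul_eq_mul]
  ring

lemma exists_hasLaplaceExponent_cumulant (hV : ∀ l, 0 ≤ l → SolvesCumulant B l (V · l))
    (hπ : SolvesMoment B (1, 1) π) (ht : 0 ≤ t) (ha : a ∈ Mset) :
    ∃ Q, HasLaplaceExponent Q fun l ↦ a.1 * (V t l).1 + a.2 * (V t l).2 := by
  refine (isMomentPositive_exp_neg_cumulant hV ht ha).exists_hasLaplaceExponent
    (by simp [(hV 0 le_rfl).eq_zero ht]) ?_
  have hlim := (tendsto_inner_cumulant_div hV hπ ht a).mul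
    (tendsto_id.mono_left (nhdsWithin_le_nhds (a := (0 : ℝ)) (s := Ioi 0)))
  rw [mul_zero] at hlim
  exact hlim.congr' (eventually_mem_nhdsWithin.mono fun ε hε ↦ div_mul_cancel₀ _ (ne_of_gt hε))

variable {P : ℝ × ℝ → Measure (ℝ × ℝ)} {I : ℝ × ℝ → ℝ} {x y : ℝ × ℝ}

theorem le_lintegral_of_isCoupling_cumulant (hV : ∀ l, 0 ≤ l → SolvesCumulant B l (V · l))
    (hπ : SolvesMoment B (1, 1) π) (ht : 0 ≤ t)
    (hx : HasLaplaceExponent (P x) fun l ↦ x.1 * (V t l).1 + x.2 * (V t l).2 + I l)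
    (hy : HasLaplaceExponent (P y) fun l ↦ y.1 * (V t l).1 + y.2 * (V t l).2 + I l)
    {Pc : Measure ((ℝ × ℝ) × (ℝ × ℝ))} (hPc : IsCoupling Pc (P x) (P y)) :
    ENNReal.ofReal |(x.1 - y.1) * (π t).1 + (x.2 - y.2) * (π t).2| ≤
      ∫⁻ w, ENNReal.ofReal (|w.1.1 - w.2.1| + |w.1.2 - w.2.2|) ∂Pc := by
  refine hx.ofReal_abs_le_of_isCoupling hPc hy hx.tendsto_zero ?_
  refine (tendsto_inner_cumulant_div hV hπ ht (x - y)).congr fun ε ↦ ?_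
  simp only [Prod.fst_sub, Prod.snd_sub]
  ring

lemma exists_hasLaplaceExponent_conv_eq (hV : ∀ l, 0 ≤ l → SolvesCumulant B l (V · l))
    (hπ : SolvesMoment B (1, 1) π) (ht : 0 ≤ t)
    (hP : ∀ x ∈ Mset, HasLaplaceExponent (P x) fun l ↦ x.1 * (V t l).1 + x.2 * (V t l).2 + I l)
    (hx : x ∈ Mset) (hy : y ∈ Mset) (hyx : y ≤ x) :
    ∃ Q, HasLaplaceExponent Q (fun l ↦ (x - y).1 * (V t l).1 + (x - y).2 * (V t l).2) ∧
      (P y).conv Q = P x := by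
  obtain ⟨Q, hQ⟩ := exists_hasLaplaceExponent_cumulant hV hπ ht (sub_mem_Mset hx hy hyx)
  refine ⟨Q, hQ, ((hP y hy).conv hQ).unique ?_⟩
  convert hP x hx using 2 with l
  simp only [Prod.fst_sub, Prod.snd_sub]
  ring

theorem exists_isCoupling_cumulant_lintegral_le (hV : ∀ l, 0 ≤ l → SolvesCumulant B l (V · l))
    (hπ : SolvesMoment B (1, 1) π) (ht : 0 ≤ t)
    (hP : ∀ x ∈ Mset, HasLaplaceExponent (P x) fun l ↦ x.1 * (V t l).1 + x.2 * (V t l).2 + I l)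
    (hx : x ∈ Mset) (hy : y ∈ Mset) :
    ∃ Pc, IsCoupling Pc (P x) (P y) ∧
      ∫⁻ w, ENNReal.ofReal (|w.1.1 - w.2.1| + |w.1.2 - w.2.2|) ∂Pc ≤
        ENNReal.ofReal (|x.1 - y.1| * (π t).1 + |x.2 - y.2| * (π t).2) := by
  have hinf := inf_mem_Mset hx hy
  obtain ⟨Q, hQ, hPx⟩ := exists_hasLaplaceExponent_conv_eq hV hπ ht hP hx hinf inf_le_left
  obtain ⟨Q', hQ', hPy⟩ := exists_hasLaplaceExponent_conv_eq hV hπ ht hP hy hinf inf_le_right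
  have := (hP _ hinf).isProbabilityMeasure
  have := hQ.isProbabilityMeasure
  have := hQ'.isProbabilityMeasure
  have hcoupling := isCoupling_sharedSummandCoupling (μ := P (x ⊓ y)) (ν := Q) (ρ := Q')
  rw [hPx, hPy] at hcoupling
  refine ⟨_, hcoupling, ?_⟩
  have hπt : 0 ≤ π t := hπ.2.1 t ht
  have hmean (z : ℝ × ℝ) (hle : x ⊓ y ≤ z) :
      0 ≤ (z - x ⊓ y).1 * (π t).1 + (z - x ⊓ y).2 * (π t).2 :=
    add_nonneg (mul_nonneg (sub_nonneg.2 hle).1 hπt.1) (mul_nonneg (sub_nonneg.2 hle).2 hπt.2)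
  calc ∫⁻ w, ENNReal.ofReal (|w.1.1 - w.2.1| + |w.1.2 - w.2.2|)
        ∂sharedSummandCoupling (P (x ⊓ y)) Q Q'
      ≤ (∫⁻ u, ENNReal.ofReal (u.1 + u.2) ∂Q) + ∫⁻ u, ENNReal.ofReal (u.1 + u.2) ∂Q' :=
        lintegral_sharedSummandCoupling_le hQ.ae_nonneg hQ'.ae_nonneg
    _ ≤ _ := add_le_add (hQ.lintegral_add_le (tendsto_inner_cumulant_div hV hπ ht _))
        (hQ'.lintegral_add_le (tendsto_inner_cumulant_div hV hπ ht _))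
    _ = ENNReal.ofReal (|x.1 - y.1| * (π t).1 + |x.2 - y.2| * (π t).2) := by
        rw [← ENNReal.ofReal_add (hmean x inf_le_left) (hmean y inf_le_right),
          ← sub_min_add_sub_min, ← sub_min_add_sub_min]
        simp only [Prod.fst_sub, Prod.snd_sub, Prod.fst_inf, Prod.snd_inf]
        ring_nf

end Cumulant

lemma IsMSBITransition.hasLaplaceExponent {V : ℝ → ℝ × ℝ → ℝ × ℝ} {b : ℝ} {m : Measure (ℝ × ℝ)}
    {P : ℝ → ℝ × ℝ → Measure (ℝ × ℝ)} (hP : IsMSBITransition V b m P) {t : ℝ} (ht : 0 ≤ t)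
    {x : ℝ × ℝ} (hx : x ∈ Mset) :
    HasLaplaceExponent (P t x) fun l ↦
      x.1 * (V t l).1 + x.2 * (V t l).2 + ∫ s in (0 : ℝ)..t, mPsi b m (V s l) := by
  obtain ⟨hprob, hsupp, hexp⟩ := hP t ht x hx
  refine ⟨hprob, ?_, fun l hl ↦ ?_⟩
  · have hmem : ∀ᵐ y ∂P t x, y ∈ Mset := hsupp
    filter_upwards [hmem] with y ⟨hy₁, n, hn⟩
    exact ⟨hy₁, by rw [hn]; exact n.cast_nonneg⟩
  · rw [hexp l hl.1 hl.2]
    ring_nf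

end Wasserstein

/-- The immigration enters only through its contribution `I` to the Laplace exponent at time `t`,
which is common to all initial states. -/
theorem wasserstein_bounds_MSBI_general {B : BranchingMechanism} {V : ℝ → ℝ × ℝ → ℝ × ℝ}
    (hV : ∀ l, 0 ≤ l → SolvesCumulant B l (V · l)) {π : ℝ → ℝ × ℝ} (hπ : SolvesMoment B (1, 1) π)
    {t : ℝ} (ht : 0 ≤ t) {I : ℝ × ℝ → ℝ} {P : ℝ × ℝ → Measure (ℝ × ℝ)}
    (hP : ∀ x ∈ Mset, HasLaplaceExponent (P x) fun l ↦ x.1 * (V t l).1 + x.2 * (V t l).2 + I l)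
    {x y : ℝ × ℝ} (hx : x ∈ Mset) (hy : y ∈ Mset) :
    (∀ Pc, IsCoupling Pc (P x) (P y) →
      ENNReal.ofReal |(x.1 - y.1) * (π t).1 + (x.2 - y.2) * (π t).2| ≤
        ∫⁻ w, ENNReal.ofReal (|w.1.1 - w.2.1| + |w.1.2 - w.2.2|) ∂Pc) ∧
    ∃ Pc, IsCoupling Pc (P x) (P y) ∧
      ∫⁻ w, ENNReal.ofReal (|w.1.1 - w.2.1| + |w.1.2 - w.2.2|) ∂Pc ≤
        ENNReal.ofReal (|x.1 - y.1| * (π t).1 + |x.2 - y.2| * (π t).2) :=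
  ⟨fun _ ↦ le_lintegral_of_isCoupling_cumulant hV hπ ht (hP x hx) (hP y hy),
    exists_isCoupling_cumulant_lintegral_le hV hπ ht hP hx hy⟩

/-- Coupling bounds for the `L¹`-Wasserstein distance between
`P^γ_t(x,·)` and `P^γ_t(y,·)` for the MSBI-process, assuming the first moment of
the immigration measure is finite. -/
theorem wasserstein_bounds_MSBI (B : BranchingMechanism)
    (V : ℝ → (ℝ × ℝ) → ℝ × ℝ)
    (hV : ∀ l : ℝ × ℝ, 0 ≤ l.1 → 0 ≤ l.2 → SolvesCumulant B l (fun t => V t l))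
    (b : ℝ) (hb : 0 < b) (m : Measure (ℝ × ℝ))
    (hm : IsImmigrationMeasure m)
    -- `∫ (z₁ + z₂) m(dz) < ∞`
    (hm_moment : ∫⁻ z, ENNReal.ofReal (z.1 + z.2) ∂m ≠ ⊤)
    (P : ℝ → (ℝ × ℝ) → Measure (ℝ × ℝ))
    (hP : IsMSBITransition V b m P)
    (π : ℝ → ℝ × ℝ) (hπ : SolvesMoment B (1, 1) π) :
    ∀ t : ℝ, 0 ≤ t → ∀ x ∈ Mset, ∀ y ∈ Mset,
      -- (i) lower bound for every coupling
      (∀ Pc : Measure ((ℝ × ℝ) × (ℝ × ℝ)), IsCoupling Pc (P t x) (P t y) →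
        ENNReal.ofReal |(x.1 - y.1) * (π t).1 + (x.2 - y.2) * (π t).2|
          ≤ ∫⁻ w, ENNReal.ofReal (|w.1.1 - w.2.1| + |w.1.2 - w.2.2|) ∂Pc) ∧
      -- (ii) upper bound for some coupling
      (∃ Pc : Measure ((ℝ × ℝ) × (ℝ × ℝ)), IsCoupling Pc (P t x) (P t y) ∧
        ∫⁻ w, ENNReal.ofReal (|w.1.1 - w.2.1| + |w.1.2 - w.2.2|) ∂Pc
          ≤ ENNReal.ofReal (|x.1 - y.1| * (π t).1 + |x.2 - y.2| * (π t).2)) :=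
  fun _ ht _ hx _ hy ↦ wasserstein_bounds_MSBI_general (fun l hl ↦ hV l hl.1 hl.2) hπ ht
    (fun _ ↦ hP.hasLaplaceExponent ht) hx hy
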